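/- arXiv:1610.06617 — 2 statements merged into one kernel-verified Lean document; each statement's English description precedes it below -/
import Mathlib

section
/- Let K be an algebraically closed field and n, m positive integers. The homogeneous elements of degree at most n^6 in S(n,m) = K[Mat_{n,n}^m]^{GL_n} form a separating subset of S(n,m); that is, β_sep(S(n,m)) ≤ n^6. -/
open MvPolynomial Matrix

/-- Coordinate functions of an `m`-tuple of `n × n` matrices. -/
def matCoords {K : Type} [Field K] {n m : ℕ} (X : Fin m → Matrix (Fin n) (Fin n) K) :
    Fin m × Fin n × Fin n → K :=
  fun p => X p.1 p.2.1 p.2.2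

/-- The ring of matrix semi-invariants `R(n,m) = K[Mat_{n,n}^m]^{SL_n × SL_n}`, where
`(A,B)` acts by `(X_1, …, X_m) ↦ (A X_1 B⁻¹, …, A X_m B⁻¹)`. -/
noncomputable def matrixSemiInvariants (K : Type) [Field K] (n m : ℕ) :
    Subalgebra K (MvPolynomial (Fin m × Fin n × Fin n) K) :=
  ⨅ (A : SpecialLinearGroup (Fin n) K) (B : SpecialLinearGroup (Fin n) K)
    (X : Fin m → Matrix (Fin n) (Fin n) K),
      AlgHom.equalizer
        (aeval (matCoords fun i => A.val * X i * (B⁻¹).val))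
        (aeval (matCoords X))

/-- The ring of matrix invariants `S(n,m) = K[Mat_{n,n}^m]^{GL_n}`, where `A` acts by
simultaneous conjugation. -/
noncomputable def matrixInvariants (K : Type) [Field K] (n m : ℕ) :
    Subalgebra K (MvPolynomial (Fin m × Fin n × Fin n) K) :=
  ⨅ (A : GeneralLinearGroup (Fin n) K) (X : Fin m → Matrix (Fin n) (Fin n) K),
      AlgHom.equalizer
        (aeval (matCoords fun i => A.val * X i * (A⁻¹).val))
        (aeval (matCoords X))


section modpart
variable {K B : Type} [Field K] [Ring B] [Algebra K B]

theorem aux_charpoly_equiv {V W : Type} [AddCommGroup V] [Module K V] [Module B V]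
    [IsScalarTower K B V] [FiniteDimensional K V]
    [AddCommGroup W] [Module K W] [Module B W]
    [IsScalarTower K B W] [FiniteDimensional K W] (e : V ≃ₗ[B] W) (b : B) :
    (Algebra.lsmul K K V b).charpoly = (Algebra.lsmul K K W b).charpoly := by
  rw [← LinearEquiv.charpoly_conj (e.restrictScalars K)]
  congr 1
  ext w
  simp [LinearEquiv.conj_apply]

theorem aux_charpoly_prod {V W : Type} [AddCommGroup V] [Module K V] [Module B V]
    [IsScalarTower K B V] [FiniteDimensional K V]
    [AddCommGroup W] [Module K W] [Module B W]
    [IsScalarTower K B W] [FiniteDimensional K W] (b : B) :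
    (Algebra.lsmul K K (V × W) b).charpoly =
      (Algebra.lsmul K K V b).charpoly * (Algebra.lsmul K K W b).charpoly := by
  rw [← LinearMap.charpoly_prodMap]
  congr 1

theorem aux_exists_embed [IsSemisimpleRing B] {V W : Type} [AddCommGroup V] [Module K V] [Module B V]
    [IsScalarTower K B V] [FiniteDimensional K V]
    [AddCommGroup W] [Module K W] [Module B W]
    [IsScalarTower K B W] [FiniteDimensional K W]
    (h : ∀ b : B, (Algebra.lsmul K K V b).charpoly = (Algebra.lsmul K K W b).charpoly)
    (S : Submodule B V) [IsSimpleModule B S] :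
    ∃ φ : S →ₗ[B] W, Function.Injective φ := by
  have := IsSimpleModule.nontrivial B S
  obtain ⟨s0, hs0⟩ := exists_ne (0 : S)
  have hsurj : Function.Surjective (LinearMap.toSpanSingleton B S s0) :=
    IsSimpleModule.toSpanSingleton_surjective B hs0
  have : Module.Projective B S := Module.projective_of_isSemisimpleRing B S
  obtain ⟨σ, hσ⟩ := Module.projective_lifting_property (LinearMap.toSpanSingleton B S s0)
    LinearMap.id hsurj
  by_contra hno
  push Not at hno
  have hz : ∀ w : W, ∀ s : S, σ s • w = 0 := by
    intro w s
    rcases LinearMap.injective_or_eq_zero ((LinearMap.toSpanSingleton B W w).comp σ) with h1 | h1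
    · exact absurd h1 (hno _)
    · simpa using LinearMap.congr_fun h1 s
  have he : σ s0 • s0 = s0 := by simpa using LinearMap.congr_fun hσ s0
  have hW : Algebra.lsmul K K W (σ s0) = 0 := by
    ext w; simpa using hz w s0
  have hr : (Algebra.lsmul K K V (σ s0)).HasEigenvalue 1 := by
    apply Module.End.hasEigenvalue_of_hasEigenvector (x := (s0 : V))
    refine ⟨?_, by simpa using hs0⟩
    rw [Module.End.mem_eigenspace_iff]
    simpa using congrArg Subtype.val he
  rw [Module.End.hasEigenvalue_iff_isRoot_charpoly, h, hW, LinearMap.charpoly_zero] at hr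
  simp at hr

theorem aux_iso [IsSemisimpleRing B] (N : ℕ) : ∀ {V W : Type} [AddCommGroup V] [Module K V] [Module B V]
    [IsScalarTower K B V] [FiniteDimensional K V]
    [AddCommGroup W] [Module K W] [Module B W]
    [IsScalarTower K B W] [FiniteDimensional K W]
    (_ : Module.finrank K V = N)
    (_ : ∀ b : B, (Algebra.lsmul K K V b).charpoly = (Algebra.lsmul K K W b).charpoly),
    Nonempty (V ≃ₗ[B] W) := by
  induction N using Nat.strong_induction_on with
  | _ N ih =>
  intro V W _ _ _ _ _ _ _ _ _ _ hV h
  have hdim : Module.finrank K V = Module.finrank K W := by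
    rw [← LinearMap.charpoly_natDegree (Algebra.lsmul K K V (1:B)), h, LinearMap.charpoly_natDegree]
  rcases IsSemisimpleModule.eq_bot_or_exists_simple_le (⊤ : Submodule B V) with htop | ⟨S, -, hS⟩
  · have h1 : Subsingleton V := by
      rw [← Submodule.subsingleton_iff B]; exact subsingleton_of_bot_eq_top htop.symm
    have h2 : Subsingleton W := by
      rw [← Module.finrank_zero_iff (R := K), ← hdim, Module.finrank_zero_iff]; exact h1
    exact ⟨0, 0, fun _ => Subsingleton.elim _ _, fun _ => Subsingleton.elim _ _⟩
  · obtain ⟨φ, hφ⟩ := aux_exists_embed (K := K) h S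
    obtain ⟨V', hV'⟩ := exists_isCompl S
    obtain ⟨W', hW'⟩ := exists_isCompl (LinearMap.range φ)
    have eS := LinearEquiv.ofInjective φ hφ
    have eV := Submodule.prodEquivOfIsCompl S V' hV'
    have eW := Submodule.prodEquivOfIsCompl _ W' hW'
    have f1 : ∀ S : Submodule B V, FiniteDimensional K S := fun S =>
      Module.Finite.of_injective (S.subtype.restrictScalars K) S.injective_subtype
    have f2 : ∀ S : Submodule B W, FiniteDimensional K S := fun S =>
      Module.Finite.of_injective (S.subtype.restrictScalars K) S.injective_subtype
    have hlt : Module.finrank K V' < N := by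
      have := (eV.restrictScalars K).finrank_eq
      rw [Module.finrank_prod, hV] at this
      have : 0 < Module.finrank K S := by
        have := IsSimpleModule.nontrivial B S
        exact Module.finrank_pos
      omega
    obtain ⟨e'⟩ := ih _ hlt (V := V') (W := W') rfl (by
      intro b
      have := h b
      rw [← aux_charpoly_equiv eV b, ← aux_charpoly_equiv eW b, aux_charpoly_prod, aux_charpoly_prod,
        aux_charpoly_equiv eS b] at this
      exact mul_left_cancel₀ (LinearMap.charpoly_monic _).ne_zero this)
    exact ⟨eV.symm ≪≫ₗ (LinearEquiv.prodCongr eS e') ≪≫ₗ eW⟩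

theorem aux_iso_hom [IsSemisimpleRing B] {V W : Type} [AddCommGroup V] [Module K V]
    [FiniteDimensional K V] [AddCommGroup W] [Module K W] [FiniteDimensional K W]
    (ρ : B →ₐ[K] Module.End K V) (σ : B →ₐ[K] Module.End K W)
    (h : ∀ b, (ρ b).charpoly = (σ b).charpoly) :
    ∃ e : V ≃ₗ[K] W, ∀ b v, e (ρ b v) = σ b (e v) := by
  let : Module B V := Module.compHom V ρ.toRingHom
  let : Module B W := Module.compHom W σ.toRingHom
  have e1 : ∀ (b : B) (v : V), b • v = ρ b v := fun _ _ => rfl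
  have e2 : ∀ (b : B) (v : W), b • v = σ b v := fun _ _ => rfl
  have : IsScalarTower K B V := ⟨fun k b v => by simp [e1]⟩
  have : IsScalarTower K B W := ⟨fun k b v => by simp [e2]⟩
  obtain ⟨e⟩ := aux_iso (K := K) (B := B) (V := V) (W := W) _ rfl (fun b => by
    have a1 : Algebra.lsmul K K V b = ρ b := by ext v; simp [e1]
    have a2 : Algebra.lsmul K K W b = σ b := by ext v; simp [e2]
    rw [a1, a2, h])
  exact ⟨e.restrictScalars K, fun b v => by
    have := e.map_smul b v
    simpa [e1, e2] using this⟩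
end modpart
section invpart
variable {K : Type} [Field K] {n m : ℕ}

theorem mem_inv_iff (f : MvPolynomial (Fin m × Fin n × Fin n) K) :
    f ∈ matrixInvariants K n m ↔ ∀ (A : GeneralLinearGroup (Fin n) K)
      (X : Fin m → Matrix (Fin n) (Fin n) K),
      aeval (matCoords fun i => A.val * X i * (A⁻¹).val) f = aeval (matCoords X) f := by
  simp only [matrixInvariants, Algebra.mem_iInf, AlgHom.mem_equalizer]

theorem inv_degenerate [Infinite K] {f : MvPolynomial (Fin m × Fin n × Fin n) K}
    (hf : f ∈ matrixInvariants K n m) (x : Fin m → Matrix (Fin n) (Fin n) K)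
    (p : Matrix (Fin n) (Fin n) K) (hp : p * p = p) (hx : ∀ i, (1 - p) * x i * p = 0) :
    aeval (matCoords fun i => p * x i * p + (1 - p) * x i * (1 - p)) f
      = aeval (matCoords x) f := by
  rw [mem_inv_iff] at hf
  let F : Polynomial K := aeval (fun q : Fin m × Fin n × Fin n =>
    Polynomial.C ((p * x q.1 * p + (1 - p) * x q.1 * (1 - p)) q.2.1 q.2.2) +
      Polynomial.X * Polynomial.C ((p * x q.1 * (1 - p)) q.2.1 q.2.2)) f
  have hF : ∀ s : K, F.eval s = aeval (matCoords fun i =>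
      p * x i * p + (1 - p) * x i * (1 - p) + s • (p * x i * (1 - p))) f := by
    intro s
    have : F.eval s = (Polynomial.aeval s) F := by simp
    rw [this]
    change ((Polynomial.aeval s).comp (aeval _)) f = _
    congr 1
    ext q
    simp [matCoords]
    ring
  have hs : ∀ s : K, s ≠ 0 → F.eval s = aeval (matCoords x) f := by
    intro s hs
    rw [hF]
    have hq : (1 - p) * (1 - p) = 1 - p := by
      simp [mul_sub, sub_mul, hp]
    have hpq : p * (1 - p) = 0 := by simp [mul_sub, hp]
    have hqp : (1 - p) * p = 0 := by simp [sub_mul, hp]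
    let A : GeneralLinearGroup (Fin n) K :=
      ⟨p + s⁻¹ • (1 - p), p + s • (1 - p), by
        simp [mul_add, add_mul, hq, hpq, hqp, hp, smul_smul, hs], by
        simp [mul_add, add_mul, hq, hpq, hqp, hp, smul_smul, hs]⟩
    rw [← hf A x]
    congr 3
    funext i
    change _ = (p + s⁻¹ • (1 - p)) * x i * (p + s • (1 - p))
    simp only [add_mul, mul_add, smul_mul_assoc, mul_smul_comm, hx, smul_zero, smul_add,
      smul_inv_smul₀ hs]
    abel
  have : F = Polynomial.C (aeval (matCoords x) f) := by
    apply Polynomial.eq_of_infinite_eval_eq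
    refine Set.Infinite.mono (s := {0}ᶜ) ?_ (Set.finite_singleton (0:K)).infinite_compl
    intro s h
    simpa using hs s h
  have h0 := hF 0
  rw [this] at h0
  simpa using h0.symm

theorem aeval_smul_eq (f : MvPolynomial (Fin m × Fin n × Fin n) K)
    (x : Fin m → Matrix (Fin n) (Fin n) K) :
    ∃ F : Polynomial K, (∀ s, F.eval s = aeval (matCoords fun i => s • x i) f) ∧
      ∀ d, F.coeff d = aeval (matCoords x) (homogeneousComponent d f) := by
  refine ⟨∑ i ∈ Finset.range (f.totalDegree + 1),
    Polynomial.monomial i (aeval (matCoords x) (homogeneousComponent i f)), ?_, ?_⟩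
  · intro s
    conv_rhs => rw [← sum_homogeneousComponent f, map_sum]
    rw [Polynomial.eval_finsetSum]
    refine Finset.sum_congr rfl fun i _ => ?_
    rw [Polynomial.eval_monomial]
    rw [aeval_def, aeval_def, eval₂_eq, eval₂_eq, Finset.sum_mul]
    refine Finset.sum_congr rfl fun e he => ?_
    have hd := homogeneousComponent_isHomogeneous i f (mem_support_iff.1 he)
    rw [Finsupp.weight_apply, Finsupp.sum] at hd
    simp only [smul_eq_mul, Pi.one_apply, mul_one] at hd
    rw [← hd, mul_assoc, ← Finset.prod_pow_eq_pow_sum, ← Finset.prod_mul_distrib]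
    congr 1
    refine Finset.prod_congr rfl fun q _ => ?_
    simp [matCoords, mul_pow, mul_comm]
  · intro d
    rw [Polynomial.finsetSum_coeff]
    simp only [Polynomial.coeff_monomial]
    rw [Finset.sum_ite_eq']
    split_ifs with h
    · rfl
    · rw [homogeneousComponent_eq_zero, map_zero]
      simpa using h

theorem inv_homog [Infinite K] {f : MvPolynomial (Fin m × Fin n × Fin n) K}
    (hf : f ∈ matrixInvariants K n m) (d : ℕ) :
    homogeneousComponent d f ∈ matrixInvariants K n m := by
  rw [mem_inv_iff] at hf ⊢
  intro A x
  obtain ⟨F, hF1, hF2⟩ := aeval_smul_eq f (fun i => A.val * x i * (A⁻¹).val)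
  obtain ⟨G, hG1, hG2⟩ := aeval_smul_eq f x
  rw [← hF2, ← hG2]
  congr 1
  apply Polynomial.funext
  intro s
  rw [hF1, hG1, ← hf A (fun i => s • x i)]
  simp only [mul_smul_comm, smul_mul_assoc]

theorem sep_of_totalDegree [Infinite K] {f : MvPolynomial (Fin m × Fin n × Fin n) K}
    (hf : f ∈ matrixInvariants K n m) (D : ℕ) (hD : f.totalDegree ≤ D)
    (v w : Fin m → Matrix (Fin n) (Fin n) K)
    (H : ∀ g ∈ matrixInvariants K n m, (∃ d ≤ D, g.IsHomogeneous d) →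
      aeval (matCoords v) g = aeval (matCoords w) g) :
    aeval (matCoords v) f = aeval (matCoords w) f := by
  rw [← sum_homogeneousComponent f, map_sum, map_sum]
  refine Finset.sum_congr rfl fun i hi => ?_
  refine H _ (inv_homog hf i) ⟨i, ?_, homogeneousComponent_isHomogeneous i f⟩
  simp at hi; omega

noncomputable def genMat (K : Type) [Field K] (n m : ℕ) :
    Fin m → Matrix (Fin n) (Fin n) (MvPolynomial (Fin m × Fin n × Fin n) K) :=
  fun i => Matrix.of fun j k => MvPolynomial.X (i, j, k)

noncomputable def chiInv (a : FreeAlgebra K (Fin m)) (n k : ℕ) :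
    MvPolynomial (Fin m × Fin n × Fin n) K :=
  (FreeAlgebra.lift K (genMat K n m) a).charpoly.coeff k

theorem map_lift_gen (x : Fin m → Matrix (Fin n) (Fin n) K) (a : FreeAlgebra K (Fin m)) :
    (aeval (matCoords x) : _ →ₐ[K] K).mapMatrix (FreeAlgebra.lift K (genMat K n m) a)
      = FreeAlgebra.lift K x a := by
  rw [← AlgHom.comp_apply]
  congr 1
  ext i j k
  simp [genMat, matCoords]

theorem aeval_chiInv (x : Fin m → Matrix (Fin n) (Fin n) K) (a : FreeAlgebra K (Fin m)) (k : ℕ) :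
    aeval (matCoords x) (chiInv a n k) = (FreeAlgebra.lift K x a).charpoly.coeff k := by
  rw [← map_lift_gen, AlgHom.mapMatrix_apply]
  have h := Matrix.charpoly_map (FreeAlgebra.lift K (genMat K n m) a)
    ((aeval (matCoords x) : MvPolynomial (Fin m × Fin n × Fin n) K →ₐ[K] K).toRingHom)
  have h2 := congrArg (fun q => Polynomial.coeff q k) h
  simp only [Polynomial.coeff_map] at h2
  exact h2.symm

theorem lift_conj (A : GeneralLinearGroup (Fin n) K) (x : Fin m → Matrix (Fin n) (Fin n) K)
    (a : FreeAlgebra K (Fin m)) :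
    FreeAlgebra.lift K (fun i => A.val * x i * (A⁻¹).val) a
      = A.val * FreeAlgebra.lift K x a * (A⁻¹).val := by
  induction a using FreeAlgebra.induction with
  | grade0 r => simp [Algebra.algebraMap_eq_smul_one]
  | grade1 i => simp
  | mul a b ha hb =>
    rw [map_mul, ha, hb, map_mul]
    simp only [mul_assoc, Units.inv_mul_cancel_left]
  | add a b ha hb => rw [map_add, ha, hb, map_add]; simp [mul_add, add_mul]

theorem chiInv_mem (a : FreeAlgebra K (Fin m)) (k : ℕ) :
    chiInv a n k ∈ matrixInvariants K n m := by
  rw [mem_inv_iff]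
  intro A x
  rw [aeval_chiInv, aeval_chiInv, lift_conj]
  congr 1
  rw [mul_assoc, Matrix.charpoly_mul_comm, mul_assoc, Units.inv_mul, mul_one]

end invpart
section degpart
variable {K : Type} [Field K] {n m : ℕ}

theorem coeff_prod_deg {σ ι : Type} (s : Finset ι) (q : ι → Polynomial (MvPolynomial σ K)) (L : ℕ)
    (h : ∀ i ∈ s, ∀ k, ((q i).coeff k).totalDegree ≤ L) (k : ℕ) :
    ((∏ i ∈ s, q i).coeff k).totalDegree ≤ s.card * L := by
  classical
  induction s using Finset.induction_on generalizing k with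
  | empty =>
    simp only [Finset.prod_empty, Polynomial.coeff_one]
    split_ifs <;> simp
  | insert a s ha ih =>
    rw [Finset.prod_insert ha, Polynomial.coeff_mul, Finset.card_insert_of_notMem ha]
    refine totalDegree_finsetSum_le fun x _ => ?_
    refine (totalDegree_mul _ _).trans ?_
    have h1 := h a (Finset.mem_insert_self _ _) x.1
    have h2 := ih (fun i hi => h i (Finset.mem_insert_of_mem hi)) x.2
    rw [add_mul, one_mul]; omega

theorem charpoly_coeff_deg {σ : Type} (M : Matrix (Fin n) (Fin n) (MvPolynomial σ K)) (L : ℕ)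
    (h : ∀ i j, (M i j).totalDegree ≤ L) (k : ℕ) :
    (M.charpoly.coeff k).totalDegree ≤ n * L := by
  rw [Matrix.charpoly, Matrix.det_apply, Polynomial.finsetSum_coeff]
  refine totalDegree_finsetSum_le fun τ _ => ?_
  rw [Polynomial.coeff_smul]
  have h1 := coeff_prod_deg Finset.univ (fun i => M.charmatrix (τ i) i) L (by
    intro i _ k
    rw [Matrix.charmatrix_apply, Polynomial.coeff_sub]
    refine (totalDegree_sub _ _).trans (max_le ?_ ?_)
    · rw [Matrix.diagonal_apply]
      split_ifs
      · rw [Polynomial.coeff_X]; split_ifs <;> simp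
      · simp
    · rw [Polynomial.coeff_C]; split_ifs
      · exact h _ _
      · simp) k
  rw [Finset.card_univ, Fintype.card_fin] at h1
  rcases Int.units_eq_one_or (Equiv.Perm.sign τ) with hh | hh <;> rw [hh]
  · simpa using h1
  · simpa using h1

/-- span of words of length at most one -/
noncomputable def letters (K : Type) [Field K] (m : ℕ) : Submodule K (FreeAlgebra K (Fin m)) :=
  Submodule.span K (insert 1 (Set.range (FreeAlgebra.ι K)))

theorem one_le_letters : (1 : Submodule K (FreeAlgebra K (Fin m))) ≤ letters K m := by
  rw [Submodule.one_le]
  exact Submodule.subset_span (Set.mem_insert _ _)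

theorem exists_mem_letters_pow (a : FreeAlgebra K (Fin m)) : ∃ k, a ∈ letters K m ^ k := by
  induction a using FreeAlgebra.induction with
  | grade0 r => exact ⟨0, by simp [Submodule.mem_one]⟩
  | grade1 i => exact ⟨1, by
      rw [pow_one]; exact Submodule.subset_span (Set.mem_insert_of_mem _ ⟨i, rfl⟩)⟩
  | mul a b ha hb =>
    obtain ⟨k, hk⟩ := ha
    obtain ⟨l, hl⟩ := hb
    exact ⟨k + l, by rw [pow_add]; exact Submodule.mul_mem_mul hk hl⟩
  | add a b ha hb =>
    obtain ⟨k, hk⟩ := ha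
    obtain ⟨l, hl⟩ := hb
    exact ⟨k + l, add_mem (pow_le_pow_right₀ one_le_letters (by omega) hk)
      (pow_le_pow_right₀ one_le_letters (by omega) hl)⟩

theorem deg_letters_pow (k : ℕ) : ∀ a ∈ letters K m ^ k, ∀ i j,
    (FreeAlgebra.lift K (genMat K n m) a i j).totalDegree ≤ k := by
  induction k with
  | zero =>
    intro a ha i j
    rw [pow_zero, Submodule.mem_one] at ha
    obtain ⟨r, rfl⟩ := ha
    rw [AlgHom.commutes, Matrix.algebraMap_matrix_apply]
    split_ifs
    · simp [MvPolynomial.algebraMap_eq]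
    · simp
  | succ k ih =>
    intro a ha
    rw [pow_succ] at ha
    induction ha using Submodule.mul_induction_on' with
    | mem_mul_mem a ha b hb =>
      intro i j
      rw [map_mul, Matrix.mul_apply]
      refine totalDegree_finsetSum_le fun l _ => (totalDegree_mul _ _).trans
        (add_le_add (ih a ha i l) ?_)
      unfold letters at hb
      clear ha
      induction hb using Submodule.span_induction with
      | mem x hx =>
        rcases hx with rfl | ⟨t, rfl⟩
        · rw [map_one, Matrix.one_apply]; split_ifs <;> simp
        · simp [genMat]
      | zero => simp
      | add x y _ _ hx hy =>
        rw [map_add, Matrix.add_apply]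
        exact (totalDegree_add _ _).trans (max_le hx hy)
      | smul r x _ hx =>
        rw [map_smul, Matrix.smul_apply]
        exact (totalDegree_smul_le _ _).trans hx
    | add x _ y _ hx hy =>
      intro i j
      rw [map_add, Matrix.add_apply]
      exact (totalDegree_add _ _).trans (max_le (hx i j) (hy i j))

theorem chain_stab {R : Type} [Ring R] [Nontrivial R] [Algebra K R] [FiniteDimensional K R]
    (M : Submodule K R) (hM : 1 ≤ M) (D : ℕ) (hD : Module.finrank K R ≤ D) (k : ℕ) :
    M ^ k ≤ M ^ (D - 1) := by
  have hex : ∃ j, j ≤ D - 1 ∧ M ^ (j + 1) = M ^ j := by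
    by_contra hno
    push Not at hno
    have key : ∀ j, j ≤ D → j + 1 ≤ Module.finrank K (M ^ j : Submodule K R) := by
      intro j
      induction j with
      | zero =>
        intro _
        rw [pow_zero]
        have : Nontrivial (1 : Submodule K R) :=
          ⟨⟨0, ⟨1, Submodule.one_le.1 le_rfl⟩, fun h => zero_ne_one (congrArg Subtype.val h)⟩⟩
        have := Module.finrank_pos (R := K) (M := (1 : Submodule K R))
        omega
      | succ j ih =>
        intro hj
        have h1 := ih (by omega)
        have h2 : M ^ j < M ^ (j + 1) :=
          lt_of_le_of_ne (pow_le_pow_right₀ hM (by omega)) (hno j (by omega)).symm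
        have h3 := Submodule.finrank_lt_finrank_of_lt h2
        omega
    have h1 := key D le_rfl
    have h2 := Submodule.finrank_le (M ^ D)
    omega
  obtain ⟨j, hj, he⟩ := hex
  have hst : ∀ i, M ^ (j + i) = M ^ j := by
    intro i
    induction i with
    | zero => rfl
    | succ i ih => rw [← add_assoc, pow_succ, ih, ← pow_succ, he]
  calc M ^ k ≤ M ^ (j + k) := pow_le_pow_right₀ hM (by omega)
    _ = M ^ j := hst k
    _ ≤ _ := pow_le_pow_right₀ hM hj

theorem charpoly_eq_of_inv [Infinite K] (hn : 0 < n) (v w : Fin m → Matrix (Fin n) (Fin n) K)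
    (H : ∀ g ∈ matrixInvariants K n m, (∃ d ≤ n ^ 6, g.IsHomogeneous d) →
      aeval (matCoords v) g = aeval (matCoords w) g) (a : FreeAlgebra K (Fin m)) :
    (FreeAlgebra.lift K v a).charpoly = (FreeAlgebra.lift K w a).charpoly := by
  have : Nonempty (Fin n) := ⟨⟨0, hn⟩⟩
  let Φ := (FreeAlgebra.lift K v).prod (FreeAlgebra.lift K w)
  obtain ⟨k, hk⟩ := exists_mem_letters_pow a
  have h1 : Φ a ∈ ((letters K m).map Φ.toLinearMap) ^ k := by
    rw [← Submodule.map_pow]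
    exact Submodule.mem_map_of_mem hk
  have h2 := chain_stab ((letters K m).map Φ.toLinearMap) (by
    rw [Submodule.one_le]
    exact ⟨1, Submodule.one_le.1 one_le_letters, map_one Φ⟩) (2 * n ^ 2) (by
      rw [Module.finrank_prod, Module.finrank_matrix]
      simp
      apply le_of_eq; ring) k h1
  rw [← Submodule.map_pow] at h2
  obtain ⟨b, hb, hba⟩ := h2
  have hba' : Φ b = Φ a := hba
  have e1 : FreeAlgebra.lift K v b = FreeAlgebra.lift K v a := congrArg Prod.fst hba'
  have e2 : FreeAlgebra.lift K w b = FreeAlgebra.lift K w a := congrArg Prod.snd hba'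
  rw [← e1, ← e2]
  ext k
  rw [← aeval_chiInv, ← aeval_chiInv]
  refine sep_of_totalDegree (chiInv_mem b k) (n ^ 6) ?_ v w H
  refine (charpoly_coeff_deg _ _ (deg_letters_pow _ b hb) k).trans ?_
  rcases Nat.lt_or_ge 1 n with h | h
  · calc n * (2 * n ^ 2 - 1) ≤ n * (n * n ^ 2) :=
        Nat.mul_le_mul_left _ ((Nat.sub_le _ _).trans (Nat.mul_le_mul_right _ h))
      _ = n ^ 4 := by ring
      _ ≤ n ^ 6 := Nat.pow_le_pow_right hn (by norm_num)
  · obtain rfl : n = 1 := by omega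
    norm_num

end degpart
section redpart
variable {K : Type} [Field K] {n m : ℕ}

theorem exists_idem_mat (I : Set (Matrix (Fin n) (Fin n) K)) :
    ∃ p : Matrix (Fin n) (Fin n) K, p * p = p ∧ (∀ b ∈ I, p * b = b) ∧
      ∀ c : Matrix (Fin n) (Fin n) K, (∀ b ∈ I, c * b = 0) → c * p = 0 := by
  let U : Submodule K (Fin n → K) := ⨆ b ∈ I, LinearMap.range (Matrix.toLin' b)
  obtain ⟨g, hg⟩ := LinearMap.exists_leftInverse_of_injective U.subtype (by simp)
  have hgU : ∀ u (hu : u ∈ U), (g u : Fin n → K) = u := fun u hu =>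
    congrArg Subtype.val (LinearMap.congr_fun hg ⟨u, hu⟩)
  have hP : ∀ u, Matrix.toLin' (LinearMap.toMatrix' (U.subtype ∘ₗ g)) u = g u := by
    intro u; rw [Matrix.toLin'_toMatrix']; rfl
  refine ⟨LinearMap.toMatrix' (U.subtype ∘ₗ g), ?_, ?_, ?_⟩
  · apply Matrix.toLin'.injective
    apply LinearMap.ext
    intro u
    rw [Matrix.toLin'_mul, LinearMap.comp_apply, hP, hP, hgU _ (g u).2]
  · intro b hb
    apply Matrix.toLin'.injective
    apply LinearMap.ext
    intro u
    rw [Matrix.toLin'_mul, LinearMap.comp_apply, hP, hgU]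
    exact (le_iSup₂_of_le (f := fun b (_ : b ∈ I) => LinearMap.range (Matrix.toLin' b)) b hb le_rfl)
      ⟨u, rfl⟩
  · intro c hc
    have hU : U ≤ LinearMap.ker (Matrix.toLin' c) := by
      refine iSup₂_le fun b hb => ?_
      rintro _ ⟨u, rfl⟩
      rw [LinearMap.mem_ker, ← LinearMap.comp_apply, ← Matrix.toLin'_mul, hc b hb]
      simp
    apply Matrix.toLin'.injective
    apply LinearMap.ext
    intro u
    rw [Matrix.toLin'_mul, LinearMap.comp_apply, hP, LinearMap.mem_ker.1 (hU (g u).2)]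
    simp

noncomputable def pairHom (z : (Fin m → Matrix (Fin n) (Fin n) K) × (Fin m → Matrix (Fin n) (Fin n) K)) :
    FreeAlgebra K (Fin m) →ₐ[K] (Matrix (Fin n) (Fin n) K × Matrix (Fin n) (Fin n) K) :=
  (FreeAlgebra.lift K z.1).prod (FreeAlgebra.lift K z.2)

theorem corner_mul {R : Type} [Ring R] (p c d : R) (hp : p * p = p)
    (hc : (1 - p) * c * p = 0) (hd : (1 - p) * d * p = 0) :
    (p * c * p + (1 - p) * c * (1 - p)) * (p * d * p + (1 - p) * d * (1 - p)) =
      p * (c * d) * p + (1 - p) * (c * d) * (1 - p) := by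
  have hq : (1 - p) * (1 - p) = 1 - p := by simp [mul_sub, sub_mul, hp]
  have hpq : p * (1 - p) = 0 := by simp [mul_sub, hp]
  have hqp : (1 - p) * p = 0 := by simp [sub_mul, hp]
  have e1 : p * (c * d) * p = p * c * (p * d * p) + p * c * ((1 - p) * d * p) := by noncomm_ring
  have e2 : (1 - p) * (c * d) * (1 - p) =
    (1 - p) * c * p * (d * (1 - p)) + (1 - p) * c * ((1 - p) * d * (1 - p)) := by noncomm_ring
  rw [e1, e2, hc, hd]
  have e3 : (p * c * p + (1 - p) * c * (1 - p)) * (p * d * p + (1 - p) * d * (1 - p)) =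
    p * c * (p * p) * d * p + p * c * (p * (1 - p)) * d * (1 - p) +
    (1 - p) * c * ((1 - p) * p) * d * p + (1 - p) * c * ((1 - p) * (1 - p)) * d * (1 - p) := by
    generalize 1 - p = q
    noncomm_ring
  rw [e3, hp, hpq, hqp, hq]
  simp only [mul_zero, zero_mul, add_zero, zero_add, mul_assoc]

theorem finrank_map_lt {R : Type} [AddCommGroup R] [Module K R] [FiniteDimensional K R]
    (T : R →ₗ[K] R) (N : Submodule K R) (b : R) (hb : b ∈ N) (hb0 : b ≠ 0) (hT : T b = 0) :
    Module.finrank K (N.map T) < Module.finrank K N := by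
  have h := LinearMap.finrank_range_add_finrank_ker (T.domRestrict N)
  rw [LinearMap.range_domRestrict] at h
  have : Nontrivial (LinearMap.ker (T.domRestrict N)) :=
    ⟨⟨0, ⟨⟨b, hb⟩, by simpa using hT⟩, fun h => hb0 (by
      have := congrArg (fun t : LinearMap.ker (T.domRestrict N) => ((t : N) : R)) h
      simpa using this.symm)⟩⟩
  have := Module.finrank_pos (R := K) (M := LinearMap.ker (T.domRestrict N))
  omega

theorem exists_sq_zero {B : Type} [Ring B] [IsArtinianRing B] (h : ¬ IsSemisimpleRing B) :
    ∃ I : Ideal B, I ≠ ⊥ ∧ ∀ a ∈ I, ∀ b ∈ I, a * b = 0 := by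
  classical
  rw [IsArtinianRing.isSemisimpleRing_iff_jacobson] at h
  have hnil : ∃ k, Ring.jacobson B ^ k = 0 := IsSemiprimaryRing.isNilpotent (R := B)
  let k := Nat.find hnil
  have hk : Ring.jacobson B ^ k = 0 := Nat.find_spec hnil
  have hk' : ∀ l < k, Ring.jacobson B ^ l ≠ 0 := fun l hl => Nat.find_min hnil hl
  have k0 : k ≠ 0 := by
    intro h0
    rw [h0, Submodule.pow_zero] at hk
    apply h
    rw [eq_bot_iff, ← Submodule.zero_eq_bot, ← hk, Ideal.one_eq_top]
    exact le_top
  have k1 : k ≠ 1 := by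
    intro h0
    rw [h0, Submodule.pow_one] at hk
    exact h hk
  refine ⟨Ring.jacobson B ^ (k - 1), hk' _ (by omega), fun a ha b hb => ?_⟩
  have h1 := Ideal.mul_mem_mul ha hb
  rw [← Submodule.pow_add _ (by omega)] at h1
  have h2 := Ideal.pow_le_pow_right (show k ≤ k - 1 + (k - 1) by omega) h1
  rw [hk] at h2
  simpa using h2

theorem reduce_ss [Infinite K] (v w : Fin m → Matrix (Fin n) (Fin n) K) :
    ∃ z : (Fin m → Matrix (Fin n) (Fin n) K) × (Fin m → Matrix (Fin n) (Fin n) K),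
      (∀ f ∈ matrixInvariants K n m, aeval (matCoords z.1) f = aeval (matCoords v) f) ∧
      (∀ f ∈ matrixInvariants K n m, aeval (matCoords z.2) f = aeval (matCoords w) f) ∧
      IsSemisimpleRing (pairHom z).range := by
  obtain ⟨z, ⟨hz1, hz2⟩, hmin⟩ := (measure fun z : (Fin m → Matrix (Fin n) (Fin n) K) ×
      (Fin m → Matrix (Fin n) (Fin n) K) =>
      Module.finrank K (LinearMap.range (pairHom z).toLinearMap)).wf.has_min
    {z | (∀ f ∈ matrixInvariants K n m, aeval (matCoords z.1) f = aeval (matCoords v) f) ∧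
      (∀ f ∈ matrixInvariants K n m, aeval (matCoords z.2) f = aeval (matCoords w) f)}
    ⟨(v, w), fun _ _ => rfl, fun _ _ => rfl⟩
  refine ⟨z, hz1, hz2, ?_⟩
  by_contra hss
  have : IsArtinianRing (pairHom z).range := IsArtinianRing.of_finite K _
  obtain ⟨I, hI0, hI⟩ := exists_sq_zero hss
  obtain ⟨b0, hb0, hb0'⟩ := Submodule.exists_mem_ne_zero_of_ne_bot hI0
  obtain ⟨p1, hp1, hpb1, hpc1⟩ := exists_idem_mat {r | ∃ b ∈ I, b.val.1 = r}
  obtain ⟨p2, hp2, hpb2, hpc2⟩ := exists_idem_mat {r | ∃ b ∈ I, b.val.2 = r}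
  let p : Matrix (Fin n) (Fin n) K × Matrix (Fin n) (Fin n) K := (p1, p2)
  have hp : p * p = p := Prod.ext hp1 hp2
  have hpb : ∀ b ∈ I, p * b.val = b.val := fun b hb =>
    Prod.ext (hpb1 _ ⟨b, hb, rfl⟩) (hpb2 _ ⟨b, hb, rfl⟩)
  have hpc : ∀ c, (∀ b ∈ I, c * b.val = 0) → c * p = 0 := by
    intro c hc
    refine Prod.ext (hpc1 _ ?_) (hpc2 _ ?_)
    · rintro _ ⟨b, hb, rfl⟩; exact congrArg Prod.fst (hc b hb)
    · rintro _ ⟨b, hb, rfl⟩; exact congrArg Prod.snd (hc b hb)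
  have hcorner : ∀ a, (1 - p) * pairHom z a * p = 0 := by
    intro a
    apply hpc
    intro b hb
    have h1 := hpb _ (I.mul_mem_left ⟨pairHom z a, ⟨a, rfl⟩⟩ hb)
    have h2 : p * (pairHom z a * b.val) = pairHom z a * b.val := h1
    rw [mul_assoc, sub_mul, h2, one_mul, sub_self]
  let z' : (Fin m → Matrix (Fin n) (Fin n) K) × (Fin m → Matrix (Fin n) (Fin n) K) :=
    (fun i => p1 * z.1 i * p1 + (1 - p1) * z.1 i * (1 - p1),
     fun i => p2 * z.2 i * p2 + (1 - p2) * z.2 i * (1 - p2))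
  have hgen : ∀ i, pairHom z (FreeAlgebra.ι K i) = (z.1 i, z.2 i) := by
    intro i; simp [pairHom]
  have hgen' : ∀ i, pairHom z' (FreeAlgebra.ι K i) = (z'.1 i, z'.2 i) := by
    intro i; simp [pairHom]
  let T : (Matrix (Fin n) (Fin n) K × Matrix (Fin n) (Fin n) K) →ₗ[K]
      (Matrix (Fin n) (Fin n) K × Matrix (Fin n) (Fin n) K) :=
    LinearMap.mulLeftRight K (p, p) + LinearMap.mulLeftRight K (1 - p, 1 - p)
  have hT : ∀ c, T c = p * c * p + (1 - p) * c * (1 - p) := by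
    intro c; simp [T, LinearMap.mulLeftRight_apply]
  have hTa : ∀ a, pairHom z' a = T (pairHom z a) := by
    intro a
    induction a using FreeAlgebra.induction with
    | grade0 r =>
      rw [AlgHom.commutes, AlgHom.commutes, Algebra.algebraMap_eq_smul_one, map_smul, hT]
      congr 1
      simp [mul_sub, sub_mul, hp]
    | grade1 i => rw [hgen, hgen', hT]; rfl
    | mul a b ha hb =>
      rw [map_mul, map_mul, ha, hb, hT, hT, hT, corner_mul p _ _ hp (hcorner a) (hcorner b)]
    | add a b ha hb => rw [map_add, map_add, ha, hb, map_add]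
  have hTb : T b0.val = 0 := by
    have e1 : b0.val * p = 0 := hpc _ (fun b hb => congrArg Subtype.val (hI b0 hb0 b hb))
    have e2 : (1 - p) * b0.val = 0 := by rw [sub_mul, hpb b0 hb0, one_mul, sub_self]
    rw [hT, e2, mul_assoc, e1, mul_zero, zero_mul, add_zero]
  refine hmin z' ⟨?_, ?_⟩ ?_
  · intro f hf
    rw [← hz1 f hf]
    exact inv_degenerate hf z.1 p1 hp1 fun i => by
      have := hcorner (FreeAlgebra.ι K i)
      rw [hgen] at this
      exact congrArg Prod.fst this
  · intro f hf
    rw [← hz2 f hf]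
    exact inv_degenerate hf z.2 p2 hp2 fun i => by
      have := hcorner (FreeAlgebra.ι K i)
      rw [hgen] at this
      exact congrArg Prod.snd this
  · have hr : LinearMap.range (pairHom z').toLinearMap =
        (LinearMap.range (pairHom z).toLinearMap).map T := by
      rw [← LinearMap.range_comp]
      congr 1
      apply LinearMap.ext
      exact hTa
    change Module.finrank K (LinearMap.range (pairHom z').toLinearMap) <
      Module.finrank K (LinearMap.range (pairHom z).toLinearMap)
    rw [hr]
    exact finrank_map_lt T _ b0.val b0.2 (fun h => hb0' (Subtype.ext h)) hTb

theorem inv_eq_of_ss [Infinite K]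
    (z : (Fin m → Matrix (Fin n) (Fin n) K) × (Fin m → Matrix (Fin n) (Fin n) K))
    (hss : IsSemisimpleRing (pairHom z).range)
    (h : ∀ a, (FreeAlgebra.lift K z.1 a).charpoly = (FreeAlgebra.lift K z.2 a).charpoly)
    {f : MvPolynomial (Fin m × Fin n × Fin n) K} (hf : f ∈ matrixInvariants K n m) :
    aeval (matCoords z.1) f = aeval (matCoords z.2) f := by
  let L : Matrix (Fin n) (Fin n) K →ₐ[K] Module.End K (Fin n → K) :=
    (Matrix.toLinAlgEquiv' : Matrix (Fin n) (Fin n) K ≃ₐ[K] _).toAlgHom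
  obtain ⟨e, he⟩ := aux_iso_hom (K := K) (B := (pairHom z).range)
    (V := Fin n → K) (W := Fin n → K)
    ((L.comp (AlgHom.fst K _ _)).comp (pairHom z).range.val)
    ((L.comp (AlgHom.snd K _ _)).comp (pairHom z).range.val) (by
      rintro ⟨_, a, rfl⟩
      change (Matrix.toLin' (FreeAlgebra.lift K z.1 a)).charpoly =
        (Matrix.toLin' (FreeAlgebra.lift K z.2 a)).charpoly
      rw [Matrix.charpoly_toLin', Matrix.charpoly_toLin', h])
  let A : GeneralLinearGroup (Fin n) K :=
    ⟨LinearMap.toMatrix' e.toLinearMap, LinearMap.toMatrix' e.symm.toLinearMap, by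
      rw [← LinearMap.toMatrix'_comp]; simp, by
      rw [← LinearMap.toMatrix'_comp]; simp⟩
  have hA : ∀ i, A.val * z.1 i = z.2 i * A.val := by
    intro i
    apply Matrix.toLin'.injective
    apply LinearMap.ext
    intro u
    rw [Matrix.toLin'_mul, Matrix.toLin'_mul]
    have := he ⟨pairHom z (FreeAlgebra.ι K i), ⟨_, rfl⟩⟩ u
    have hgen : pairHom z (FreeAlgebra.ι K i) = (z.1 i, z.2 i) := by simp [pairHom]
    change e (Matrix.toLin' (pairHom z (FreeAlgebra.ι K i)).1 u) =
      Matrix.toLin' (pairHom z (FreeAlgebra.ι K i)).2 (e u) at this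
    rw [hgen] at this
    change Matrix.toLin' (LinearMap.toMatrix' e.toLinearMap) _ =
      Matrix.toLin' (z.2 i) (Matrix.toLin' (LinearMap.toMatrix' e.toLinearMap) u)
    rw [Matrix.toLin'_toMatrix']
    exact this
  rw [mem_inv_iff] at hf
  rw [← hf A z.1]
  congr 3
  funext i
  rw [hA, mul_assoc, Units.mul_inv, mul_one]

end redpart

/-- The homogeneous elements of degree `≤ n^6` in `S(n,m)` form a separating
subset: any two points of `Mat_{n,n}^m` separated by some invariant are separated by a
homogeneous invariant of degree `≤ n^6`. -/
theorem stmt_8 (K : Type) [Field K] [IsAlgClosed K] (n m : ℕ) (hn : 0 < n) (hm : 0 < m)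
    (v w : Fin m → Matrix (Fin n) (Fin n) K)
    (hvw : ∃ f ∈ matrixInvariants K n m, aeval (matCoords v) f ≠ aeval (matCoords w) f) :
    ∃ g ∈ matrixInvariants K n m, (∃ d ≤ n ^ 6, g.IsHomogeneous d) ∧
      aeval (matCoords v) g ≠ aeval (matCoords w) g := by
  have : Infinite K := inferInstance
  by_contra hno
  have H : ∀ g ∈ matrixInvariants K n m, (∃ d ≤ n ^ 6, g.IsHomogeneous d) →
      aeval (matCoords v) g = aeval (matCoords w) g := by
    intro g hg hd
    by_contra hne
    exact hno ⟨g, hg, hd, hne⟩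
  obtain ⟨f, hf, hne⟩ := hvw
  apply hne
  obtain ⟨z, hz1, hz2, hss⟩ := reduce_ss v w
  rw [← hz1 f hf, ← hz2 f hf]
  refine inv_eq_of_ss z hss (fun a => ?_) hf
  have hvw' := charpoly_eq_of_inv hn v w H a
  ext k
  rw [← aeval_chiInv, ← aeval_chiInv, hz1 _ (chiInv_mem a k), hz2 _ (chiInv_mem a k),
    aeval_chiInv, aeval_chiInv, hvw']
end

section
/- Let K be an algebraically closed field, Q a finite quiver, and α a dimension vector. The homogeneous elements of degree at most N^6 in I(Q,α) = K[Rep(Q,α)]^{GL(α)}, where N = Σ_{i∈Q_0} α_i, form a separating subset of I(Q,α); that is, β_sep(I(Q,α)) ≤ N^6. -/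
open MvPolynomial Matrix

/-- Coordinate functions of a representation of a quiver with arrows `Q1`,
tail/head maps `ta ha : Q1 → Q0` and dimension vector `α`. -/
def repCoords {K : Type} [Field K] {Q0 Q1 : Type} {ta ha : Q1 → Q0} {α : Q0 → ℕ}
    (v : (a : Q1) → Matrix (Fin (α (ha a))) (Fin (α (ta a))) K) :
    ((a : Q1) × (Fin (α (ha a)) × Fin (α (ta a)))) → K :=
  fun p => v p.1 p.2.1 p.2.2

/-- The ring of quiver invariants `I(Q,α) = K[Rep(Q,α)]^{GL(α)}`. -/
noncomputable def quiverInvariants (K : Type) [Field K] {Q0 Q1 : Type}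
    (ta ha : Q1 → Q0) (α : Q0 → ℕ) :
    Subalgebra K (MvPolynomial ((a : Q1) × (Fin (α (ha a)) × Fin (α (ta a)))) K) :=
  ⨅ (A : (i : Q0) → GeneralLinearGroup (Fin (α i)) K)
    (v : (a : Q1) → Matrix (Fin (α (ha a))) (Fin (α (ta a))) K),
      AlgHom.equalizer
        (aeval (repCoords fun a => (A (ha a)).val * v a * ((A (ta a))⁻¹).val))
        (aeval (repCoords v))

/-- The ring of quiver semi-invariants `SI(Q,α) = K[Rep(Q,α)]^{SL(α)}`. -/
noncomputable def quiverSemiInvariants (K : Type) [Field K] {Q0 Q1 : Type}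
    (ta ha : Q1 → Q0) (α : Q0 → ℕ) :
    Subalgebra K (MvPolynomial ((a : Q1) × (Fin (α (ha a)) × Fin (α (ta a)))) K) :=
  ⨅ (A : (i : Q0) → SpecialLinearGroup (Fin (α i)) K)
    (v : (a : Q1) → Matrix (Fin (α (ha a))) (Fin (α (ta a))) K),
      AlgHom.equalizer
        (aeval (repCoords fun a => (A (ha a)).val * v a * ((A (ta a))⁻¹).val))
        (aeval (repCoords v))

/-- The weight space `SI(Q,α)_σ` of semi-invariants of weight `σ : Q0 → ℤ`:
those `f` with `A · f = (∏ i, det (A i) ^ σ i) • f`, i.e.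
`f(A⁻¹ · v) = (∏ i, det (A i) ^ σ i) * f(v)` for all `A ∈ GL(α)`. -/
noncomputable def quiverSemiInvariantsOfWeight (K : Type) [Field K] {Q0 Q1 : Type}
    [Fintype Q0] (ta ha : Q1 → Q0) (α : Q0 → ℕ) (σ : Q0 → ℤ) :
    Submodule K (MvPolynomial ((a : Q1) × (Fin (α (ha a)) × Fin (α (ta a)))) K) where
  carrier := { f | ∀ (A : (i : Q0) → GeneralLinearGroup (Fin (α i)) K)
      (v : (a : Q1) → Matrix (Fin (α (ha a))) (Fin (α (ta a))) K),
      aeval (repCoords fun a => ((A (ha a))⁻¹).val * v a * (A (ta a)).val) f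
        = (∏ i : Q0, ((A i).val.det) ^ (σ i)) * aeval (repCoords v) f }
  add_mem' := by
    intro f g hf hg A v
    rw [map_add, map_add, hf A v, hg A v, mul_add]
  zero_mem' := by
    intro A v
    simp
  smul_mem' := by
    intro c f hf A v
    rw [_root_.map_smul, _root_.map_smul, hf A v, smul_eq_mul, smul_eq_mul]
    ring

/-- `IsQuiverPath ta ha x y l` : the list of arrows `l` is a directed path from
vertex `x` to vertex `y`. -/
def IsQuiverPath {Q0 Q1 : Type} (ta ha : Q1 → Q0) (x y : Q0) : List Q1 → Prop
  | [] => x = y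
  | a :: l =>
      ta a = x ∧ List.Chain' (fun b c => ha b = ta c) (a :: l) ∧
        ha ((a :: l).getLast (List.cons_ne_nil a l)) = y

/-- The number of directed paths from `x` to `y`. -/
noncomputable def numQuiverPaths {Q0 Q1 : Type} (ta ha : Q1 → Q0) (x y : Q0) : ℕ :=
  Nat.card { l : List Q1 // IsQuiverPath ta ha x y l }

/-- A quiver has no oriented cycles if there is no nonempty directed path from a
vertex to itself. -/
def HasNoOrientedCycles {Q0 Q1 : Type} (ta ha : Q1 → Q0) : Prop :=
  ∀ (x : Q0) (l : List Q1), l ≠ [] → ¬ IsQuiverPath ta ha x x l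

/-- The homogeneous elements of degree `≤ N^6` in `I(Q,α)`, where
`N = ∑ i, α i`, form a separating subset of `I(Q,α)`. -/

theorem qi_common_simple {F V W : Type} [Ring F] [AddCommGroup V] [Module F V]
    [AddCommGroup W] [Module F W] [IsSemisimpleModule F V]
    (f : V →ₗ[F] W) (hf : f ≠ 0) :
    ∃ (S : Submodule F V) (S' : Submodule F W), S ≠ ⊥ ∧ Nonempty (S ≃ₗ[F] S') := by
  obtain ⟨m, hm, ne⟩ := LinearMap.exists_ne_zero_of_sSup_eq_top hf _
    (IsSemisimpleModule.sSup_simples_eq_top F V)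
  have hm' : IsSimpleModule F m := hm
  have hinj := LinearMap.injective_of_ne_zero ne
  refine ⟨m, LinearMap.range (f ∘ₗ m.subtype), ?_, ⟨LinearEquiv.ofInjective _ hinj⟩⟩
  intro h
  have := IsSimpleModule.nontrivial F m
  exact (Submodule.nontrivial_iff_ne_bot.mp this) h

theorem qi_charpoly_equiv {K F V W : Type} [Field K] [Ring F] [Algebra K F]
    [AddCommGroup V] [Module K V] [Module F V] [IsScalarTower K F V]
    [AddCommGroup W] [Module K W] [Module F W] [IsScalarTower K F W]
    [FiniteDimensional K V] [FiniteDimensional K W]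
    (e : V ≃ₗ[F] W) (x : F) :
    (Algebra.lsmul K K V x).charpoly = (Algebra.lsmul K K W x).charpoly := by
  have := LinearEquiv.charpoly_conj (e.restrictScalars K) (Algebra.lsmul K K V x)
  rw [← this]
  congr 1
  ext w
  simp [LinearEquiv.conj_apply]

theorem qi_charpoly_prod {K F V W : Type} [Field K] [Ring F] [Algebra K F]
    [AddCommGroup V] [Module K V] [Module F V] [IsScalarTower K F V]
    [AddCommGroup W] [Module K W] [Module F W] [IsScalarTower K F W]
    [FiniteDimensional K V] [FiniteDimensional K W] (x : F) :
    (Algebra.lsmul K K (V × W) x).charpoly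
      = (Algebra.lsmul K K V x).charpoly * (Algebra.lsmul K K W x).charpoly := by
  rw [← LinearMap.charpoly_prodMap]
  congr 1

theorem qi_exists_hom {K F V W : Type} [Field K] [Ring F] [Algebra K F]
    [AddCommGroup V] [Module K V] [Module F V] [IsScalarTower K F V]
    [AddCommGroup W] [Module K W] [Module F W] [IsScalarTower K F W]
    [FiniteDimensional K V] [FiniteDimensional K W]
    [IsSemisimpleModule F V] [IsSemisimpleModule F W] [Nontrivial V]
    (h : ∀ x : F, (Algebra.lsmul K K V x).charpoly = (Algebra.lsmul K K W x).charpoly)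
    (h1 : ∀ f : V →ₗ[F] W, f = 0) (h2 : ∀ f : W →ₗ[F] V, f = 0) : False := by
  have : IsSemisimpleModule F (V × W) := by
    have a : IsSemisimpleModule F (LinearMap.range (LinearMap.inl F V W)) := .range _
    have b : IsSemisimpleModule F (LinearMap.range (LinearMap.inr F V W)) := .range _
    have c := a.sup b
    rw [LinearMap.sup_range_inl_inr] at c
    exact IsSemisimpleModule.congr (Submodule.topEquiv (R := F) (M := V × W)).symm
  let f : Module.End (Module.End F (V × W)) (V × W) :=
    { toFun := fun p => (p.1, 0)
      map_add' := by intro p q; simp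
      map_smul' := by
        intro g p
        have e1 : ((g (0, p.2)).1 : V) = 0 :=
          congr($(h2 (LinearMap.fst F V W ∘ₗ g ∘ₗ LinearMap.inr F V W)) p.2)
        have e2 : ((g (p.1, 0)).2 : W) = 0 :=
          congr($(h1 (LinearMap.snd F V W ∘ₗ g ∘ₗ LinearMap.inl F V W)) p.1)
        have e3 : g p = g (p.1, 0) + g (0, p.2) := by
          rw [← map_add]; simp
        ext
        · simp [e3, e1]
        · simp [e2] }
  classical
  let b := Module.finBasis K (V × W)
  obtain ⟨r, hr⟩ := jacobson_density f (Finset.univ.image b)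
  have hlin : (LinearMap.inl K V W ∘ₗ LinearMap.fst K V W) = Algebra.lsmul K K (V × W) r := by
    apply b.ext
    intro i
    exact hr (b i) (by simp)
  have hV : Algebra.lsmul K K V r = 1 := by
    ext v
    have := congr(($hlin (v, 0)).1)
    simpa using this.symm
  have hW : Algebra.lsmul K K W r = 0 := by
    ext w
    have := congr(($hlin (0, w)).2)
    simpa using this.symm
  have := h r
  rw [hV, hW, LinearMap.charpoly_one, LinearMap.charpoly_zero] at this
  have := congr(Polynomial.eval 1 $this)
  simp [zero_pow Module.finrank_pos.ne'] at this

theorem qi_brauer_nesbitt {K F : Type} [Field K] [Ring F] [Algebra K F] (n : ℕ) :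
    ∀ (V W : Type) [AddCommGroup V] [Module K V] [Module F V] [IsScalarTower K F V]
    [AddCommGroup W] [Module K W] [Module F W] [IsScalarTower K F W]
    [FiniteDimensional K V] [FiniteDimensional K W]
    [IsSemisimpleModule F V] [IsSemisimpleModule F W]
    (_ : Module.finrank K V = n)
    (_ : ∀ x : F, (Algebra.lsmul K K V x).charpoly = (Algebra.lsmul K K W x).charpoly),
    Nonempty (V ≃ₗ[F] W) := by
  induction n using Nat.strong_induction_on with
  | _ n ih =>
    intro V W _ _ _ _ _ _ _ _ _ _ _ _ hn h
    have hfr : Module.finrank K V = Module.finrank K W := by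
      have := congr(Polynomial.natDegree $(h 0))
      simpa [LinearMap.charpoly_natDegree] using this
    rcases subsingleton_or_nontrivial V with hV | hV
    · have : Subsingleton W := by
        rw [← Module.finrank_zero_iff (R := K), ← hfr]
        exact Module.finrank_zero_iff.mpr hV
      exact ⟨{ (0 : V →ₗ[F] W) with
        invFun := fun _ => 0
        left_inv := fun _ => Subsingleton.elim _ _
        right_inv := fun _ => Subsingleton.elim _ _ }⟩
    have key : ∃ (S : Submodule F V) (S' : Submodule F W), S ≠ ⊥ ∧ Nonempty (S ≃ₗ[F] S') := by
      by_cases h1 : ∀ f : V →ₗ[F] W, f = 0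
      · by_cases h2 : ∀ f : W →ₗ[F] V, f = 0
        · exact (qi_exists_hom h h1 h2).elim
        · push Not at h2
          obtain ⟨f, hf⟩ := h2
          obtain ⟨S, S', hS, ⟨e⟩⟩ := qi_common_simple f hf
          refine ⟨S', S, ?_, ⟨e.symm⟩⟩
          rintro rfl
          apply hS
          have : Subsingleton S := e.toEquiv.subsingleton
          exact Submodule.subsingleton_iff_eq_bot.mp this
      · push Not at h1
        obtain ⟨f, hf⟩ := h1
        exact qi_common_simple f hf
    obtain ⟨S, S', hS, ⟨e⟩⟩ := key
    obtain ⟨C, hC⟩ := exists_isCompl S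
    obtain ⟨C', hC'⟩ := exists_isCompl S'
    have e1 := Submodule.prodEquivOfIsCompl S C hC
    have e2 := Submodule.prodEquivOfIsCompl S' C' hC'
    have fS : FiniteDimensional K S :=
      inferInstanceAs (FiniteDimensional K (S.restrictScalars K))
    have fC : FiniteDimensional K C :=
      inferInstanceAs (FiniteDimensional K (C.restrictScalars K))
    have fS' : FiniteDimensional K S' :=
      inferInstanceAs (FiniteDimensional K (S'.restrictScalars K))
    have fC' : FiniteDimensional K C' :=
      inferInstanceAs (FiniteDimensional K (C'.restrictScalars K))
    have hch : ∀ x : F, (Algebra.lsmul K K C x).charpoly = (Algebra.lsmul K K C' x).charpoly := by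
      intro x
      have a := h x
      rw [← qi_charpoly_equiv e1 x, ← qi_charpoly_equiv e2 x, qi_charpoly_prod, qi_charpoly_prod,
        qi_charpoly_equiv e x] at a
      exact mul_left_cancel₀ (LinearMap.charpoly_monic _).ne_zero a
    have hSpos : 0 < Module.finrank K S := by
      have := Submodule.nontrivial_iff_ne_bot.mpr hS
      exact Module.finrank_pos
    have hfin : Module.finrank K S + Module.finrank K C = n := by
      rw [← hn, ← Module.finrank_prod]
      exact (e1.restrictScalars K).finrank_eq
    obtain ⟨e'⟩ := ih (Module.finrank K C) (by omega) C C' rfl hch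
    exact ⟨e1.symm ≪≫ₗ (e.prodCongr e') ≪≫ₗ e2⟩

section QI
variable {Q0 Q1 : Type} [Fintype Q0] [DecidableEq Q0]

/-- inclusion matrix of a block -/
def qiInc (R : Type) [CommRing R] (α : Q0 → ℕ) (i : Q0) :
    Matrix ((i : Q0) × Fin (α i)) (Fin (α i)) R :=
  Matrix.of fun p k => if p = ⟨i, k⟩ then 1 else 0

theorem qiInc_same (R : Type) [CommRing R] (α : Q0 → ℕ) (i : Q0) :
    (qiInc R α i)ᵀ * qiInc R α i = 1 := by
  ext k l
  simp [qiInc, Matrix.mul_apply, Matrix.one_apply, Sigma.ext_iff, eq_comm]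

theorem qiInc_ne (R : Type) [CommRing R] (α : Q0 → ℕ) {i j : Q0} (h : i ≠ j) :
    (qiInc R α i)ᵀ * qiInc R α j = 0 := by
  ext k l
  rw [Matrix.mul_apply]
  apply Finset.sum_eq_zero
  rintro p -
  simp only [qiInc, Matrix.transpose_apply, Matrix.of_apply]
  split_ifs with h1 h2
  · subst h1
    exact absurd (congrArg Sigma.fst h2) h
  all_goals simp

theorem qiInc_sum (R : Type) [CommRing R] (α : Q0 → ℕ) :
    ∑ i, qiInc R α i * (qiInc R α i)ᵀ = 1 := by
  ext p q
  rw [Matrix.sum_apply]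
  simp only [qiInc, Matrix.mul_apply, Matrix.transpose_apply, Matrix.of_apply]
  rw [← Fintype.sum_sigma' (fun i k => (if p = (⟨i, k⟩ : (i : Q0) × Fin (α i)) then (1:R) else 0) *
    (if q = ⟨i, k⟩ then 1 else 0))]
  simp [Matrix.one_apply]

/-- block diagonal matrix -/
def qiDiag {R : Type} [CommRing R] {α : Q0 → ℕ} (A : (i : Q0) → Matrix (Fin (α i)) (Fin (α i)) R) :
    Matrix ((i : Q0) × Fin (α i)) ((i : Q0) × Fin (α i)) R :=
  ∑ i, qiInc R α i * A i * (qiInc R α i)ᵀ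

theorem qiDiag_inc {R : Type} [CommRing R] {α : Q0 → ℕ}
    (A : (i : Q0) → Matrix (Fin (α i)) (Fin (α i)) R) (j : Q0) :
    qiDiag A * qiInc R α j = qiInc R α j * A j := by
  rw [qiDiag, Matrix.sum_mul, Finset.sum_eq_single j]
  · rw [Matrix.mul_assoc, qiInc_same, Matrix.mul_one]
  · intro b _ hb
    rw [Matrix.mul_assoc, qiInc_ne R α hb, Matrix.mul_zero]
  · simp

theorem inc_qiDiag {R : Type} [CommRing R] {α : Q0 → ℕ}
    (A : (i : Q0) → Matrix (Fin (α i)) (Fin (α i)) R) (j : Q0) :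
    (qiInc R α j)ᵀ * qiDiag A = A j * (qiInc R α j)ᵀ := by
  rw [qiDiag, Matrix.mul_sum, Finset.sum_eq_single j]
  · rw [← Matrix.mul_assoc, ← Matrix.mul_assoc, qiInc_same, Matrix.one_mul]
  · intro b _ hb
    rw [← Matrix.mul_assoc, ← Matrix.mul_assoc, qiInc_ne R α hb.symm, Matrix.zero_mul,
      Matrix.zero_mul]
  · simp

theorem qiDiag_mul {R : Type} [CommRing R] {α : Q0 → ℕ}
    (A B : (i : Q0) → Matrix (Fin (α i)) (Fin (α i)) R) :
    qiDiag A * qiDiag B = qiDiag (fun i => A i * B i) := by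
  have hB : qiDiag B = ∑ i, qiInc R α i * B i * (qiInc R α i)ᵀ := rfl
  have hAB : qiDiag (fun i => A i * B i) = ∑ i, qiInc R α i * (A i * B i) * (qiInc R α i)ᵀ := rfl
  rw [hB, hAB, Matrix.mul_sum]
  apply Finset.sum_congr rfl
  intro i _
  rw [← Matrix.mul_assoc, ← Matrix.mul_assoc, qiDiag_inc, Matrix.mul_assoc (qiInc R α i)]

theorem qiDiag_one {R : Type} [CommRing R] {α : Q0 → ℕ} :
    qiDiag (fun i => (1 : Matrix (Fin (α i)) (Fin (α i)) R)) = 1 := by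
  simp [qiDiag, qiInc_sum]

variable {ta ha : Q1 → Q0} {α : Q0 → ℕ}

/-- image of generators -/
def qiGen {R : Type} [CommRing R] (v : (a : Q1) → Matrix (Fin (α (ha a))) (Fin (α (ta a))) R) :
    Q0 ⊕ Q1 → Matrix ((i : Q0) × Fin (α i)) ((i : Q0) × Fin (α i)) R
  | Sum.inl i => qiInc R α i * (qiInc R α i)ᵀ
  | Sum.inr a => qiInc R α (ha a) * v a * (qiInc R α (ta a))ᵀ

/-- The algebra hom. -/
noncomputable def qiRho (K : Type) [Field K] {R : Type} [CommRing R] [Algebra K R]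
    (v : (a : Q1) → Matrix (Fin (α (ha a))) (Fin (α (ta a))) R) :
    FreeAlgebra K (Q0 ⊕ Q1) →ₐ[K] Matrix ((i : Q0) × Fin (α i)) ((i : Q0) × Fin (α i)) R :=
  FreeAlgebra.lift K (qiGen v)

theorem qiRho_ι (K : Type) [Field K] {R : Type} [CommRing R] [Algebra K R]
    (v : (a : Q1) → Matrix (Fin (α (ha a))) (Fin (α (ta a))) R) (s : Q0 ⊕ Q1) :
    qiRho K v (FreeAlgebra.ι K s) = qiGen v s := by
  simp [qiRho]

theorem qiRho_intertwine (K : Type) [Field K] {R : Type} [CommRing R] [Algebra K R]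
    (v w : (a : Q1) → Matrix (Fin (α (ha a))) (Fin (α (ta a))) R)
    (G : Matrix ((i : Q0) × Fin (α i)) ((i : Q0) × Fin (α i)) R)
    (h : ∀ s, G * qiGen v s = qiGen w s * G) (x : FreeAlgebra K (Q0 ⊕ Q1)) :
    G * qiRho K v x = qiRho K w x * G := by
  induction x using FreeAlgebra.induction with
  | grade0 r => rw [AlgHom.commutes, AlgHom.commutes, Algebra.commutes]
  | grade1 s => rw [qiRho_ι, qiRho_ι, h]
  | mul a b ha hb => rw [map_mul, map_mul, ← mul_assoc, ha, mul_assoc, hb, mul_assoc]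
  | add a b ha hb => rw [map_add, map_add, mul_add, add_mul, ha, hb]

theorem qiGen_diag {R : Type} [CommRing R]
    (v w : (a : Q1) → Matrix (Fin (α (ha a))) (Fin (α (ta a))) R)
    (A : (i : Q0) → Matrix (Fin (α i)) (Fin (α i)) R)
    (h : ∀ a, A (ha a) * v a = w a * A (ta a)) (s : Q0 ⊕ Q1) :
    qiDiag A * qiGen v s = qiGen w s * qiDiag A := by
  rcases s with i | a
  · simp only [qiGen]
    rw [← Matrix.mul_assoc, qiDiag_inc, Matrix.mul_assoc, Matrix.mul_assoc, inc_qiDiag]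
  · simp only [qiGen]
    rw [← Matrix.mul_assoc, ← Matrix.mul_assoc, qiDiag_inc, Matrix.mul_assoc _ _ (qiDiag A),
      inc_qiDiag, Matrix.mul_assoc (qiInc R α (ha a)), h]
    simp only [Matrix.mul_assoc]

theorem qiRho_map (K : Type) [Field K] {R S : Type} [CommRing R] [Algebra K R]
    [CommRing S] [Algebra K S] (φ : R →ₐ[K] S)
    (v : (a : Q1) → Matrix (Fin (α (ha a))) (Fin (α (ta a))) R) (x : FreeAlgebra K (Q0 ⊕ Q1)) :
    (qiRho K v x).map φ = qiRho K (fun a => (v a).map φ) x := by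
  have hinc : ∀ i, (qiInc R α i).map φ = qiInc S α i := by
    intro i; ext p k; simp only [qiInc, Matrix.map_apply, Matrix.of_apply]; split_ifs <;> simp
  have hinc' : ∀ i, ((qiInc R α i)ᵀ).map φ = (qiInc S α i)ᵀ := by
    intro i; rw [← hinc]; rfl
  have : (φ.mapMatrix).comp (qiRho K v) = qiRho K (fun a => (v a).map φ) := by
    apply FreeAlgebra.hom_ext
    funext s
    simp only [Function.comp_apply, AlgHom.comp_apply, qiRho_ι, AlgHom.mapMatrix_apply]
    rcases s with i | a
    · simp only [qiGen, Matrix.map_mul, hinc, hinc']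
    · simp only [qiGen, Matrix.map_mul, hinc, hinc']
  exact congr($this x)

/-- generic representation -/
noncomputable def qiX (K : Type) [Field K] (ta ha : Q1 → Q0) (α : Q0 → ℕ) (a : Q1) :
    Matrix (Fin (α (ha a))) (Fin (α (ta a)))
      (MvPolynomial ((a : Q1) × (Fin (α (ha a)) × Fin (α (ta a)))) K) :=
  Matrix.of fun i j => X ⟨a, (i, j)⟩

theorem qi_aeval_det (K : Type) [Field K]
    (v : (a : Q1) → Matrix (Fin (α (ha a))) (Fin (α (ta a))) K) (x : FreeAlgebra K (Q0 ⊕ Q1)) :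
    aeval (repCoords v) (qiRho K (qiX K ta ha α) x).det = (qiRho K v x).det := by
  rw [AlgHom.map_det, AlgHom.mapMatrix_apply, qiRho_map]
  congr 3
  funext a
  ext i j
  simp [qiX, repCoords]

theorem qi_mem_inv {K : Type} [Field K]
    {f : MvPolynomial ((a : Q1) × (Fin (α (ha a)) × Fin (α (ta a)))) K} :
    f ∈ quiverInvariants K ta ha α ↔ ∀ (A : (i : Q0) → GeneralLinearGroup (Fin (α i)) K)
    (v : (a : Q1) → Matrix (Fin (α (ha a))) (Fin (α (ta a))) K),
    aeval (repCoords fun a => (A (ha a)).val * v a * ((A (ta a))⁻¹).val) f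
      = aeval (repCoords v) f := by
  simp [quiverInvariants, Algebra.mem_iInf]

theorem qi_det_inv (K : Type) [Field K] (x : FreeAlgebra K (Q0 ⊕ Q1)) :
    (qiRho K (qiX K ta ha α) x).det ∈ quiverInvariants K ta ha α := by
  rw [qi_mem_inv]
  intro A v
  rw [qi_aeval_det, qi_aeval_det]
  have h := qiRho_intertwine K v (fun a => (A (ha a)).val * v a * ((A (ta a))⁻¹).val)
    (qiDiag fun i => (A i).val) (qiGen_diag _ _ _ (by
      intro a
      rw [Matrix.mul_assoc, ← Units.val_mul]; simp)) x
  have hu : (qiDiag fun i => (A i).val) * (qiDiag fun i => ((A i)⁻¹).val) = 1 := by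
    rw [qiDiag_mul]
    simp only [← Units.val_mul, mul_inv_cancel, Units.val_one]
    exact qiDiag_one
  have hd := congrArg Matrix.det hu
  rw [Matrix.det_mul, Matrix.det_one] at hd
  have h2 := congrArg Matrix.det h
  rw [Matrix.det_mul, Matrix.det_mul, mul_comm] at h2
  exact (mul_right_cancel₀ (left_ne_zero_of_mul_eq_one hd) h2).symm


theorem qi_deg_mul {K σ m n o : Type} [Field K] [Fintype n] (a b : ℕ)
    (A : Matrix m n (MvPolynomial σ K)) (B : Matrix n o (MvPolynomial σ K))
    (hA : ∀ i j, (A i j).totalDegree ≤ a) (hB : ∀ i j, (B i j).totalDegree ≤ b) (i : m) (j : o) :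
    ((A * B) i j).totalDegree ≤ a + b := by
  rw [Matrix.mul_apply]
  apply totalDegree_finsetSum_le
  intro k _
  exact (totalDegree_mul _ _).trans (add_le_add (hA _ _) (hB _ _))

theorem qi_deg_det {K σ n : Type} [Field K] [Fintype n] [DecidableEq n] (a : ℕ)
    (A : Matrix n n (MvPolynomial σ K)) (hA : ∀ i j, (A i j).totalDegree ≤ a) :
    A.det.totalDegree ≤ Fintype.card n * a := by
  rw [Matrix.det_apply']
  apply totalDegree_finsetSum_le
  intro s _
  refine (totalDegree_mul _ _).trans ?_
  have h1 : (((Equiv.Perm.sign s : ℤ) : MvPolynomial σ K)).totalDegree = 0 := by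
    rw [← map_intCast (C : K →+* MvPolynomial σ K)]
    exact totalDegree_C _
  rw [h1, zero_add]
  refine (totalDegree_finsetProd _ _).trans ?_
  refine (Finset.sum_le_sum (fun i _ => hA (s i) i)).trans ?_
  simp

/-- generating subspace -/
noncomputable def qiS (K : Type) [Field K] (Z : Type) : Submodule K (FreeAlgebra K Z) :=
  1 ⊔ Submodule.span K (Set.range (FreeAlgebra.ι K))

theorem qiS_exists (K : Type) [Field K] (Z : Type) (x : FreeAlgebra K Z) :
    ∃ n, x ∈ (qiS K Z) ^ n := by
  have h1 : (1 : Submodule K (FreeAlgebra K Z)) ≤ qiS K Z := le_sup_left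
  induction x using FreeAlgebra.induction with
  | grade0 r => exact ⟨0, by rw [pow_zero]; exact Submodule.algebraMap_mem r⟩
  | grade1 s =>
    refine ⟨1, ?_⟩
    rw [pow_one]
    exact (le_sup_right : _ ≤ qiS K Z) (Submodule.subset_span ⟨s, rfl⟩)
  | mul a b ha hb =>
    obtain ⟨m, hm⟩ := ha
    obtain ⟨n, hn⟩ := hb
    exact ⟨m + n, by rw [pow_add]; exact Submodule.mul_mem_mul hm hn⟩
  | add a b ha hb =>
    obtain ⟨m, hm⟩ := ha
    obtain ⟨n, hn⟩ := hb
    refine ⟨m + n, Submodule.add_mem _ ?_ ?_⟩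
    · exact pow_le_pow_right' h1 (Nat.le_add_right m n) hm
    · exact pow_le_pow_right' h1 (Nat.le_add_left n m) hn

theorem qi_rho_deg (K : Type) [Field K] (n : ℕ) :
    ∀ (x : FreeAlgebra K (Q0 ⊕ Q1)) (_ : x ∈ (qiS K (Q0 ⊕ Q1)) ^ n),
    ∀ p q, (qiRho K (qiX K ta ha α) x p q).totalDegree ≤ n := by
  let σ := (a : Q1) × (Fin (α (ha a)) × Fin (α (ta a)))
  let D : ℕ → Submodule K (FreeAlgebra K (Q0 ⊕ Q1)) := fun n =>
    { carrier := {x | ∀ p q, (qiRho K (qiX K ta ha α) x p q).totalDegree ≤ n}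
      add_mem' := by
        intro a b ha hb p q
        rw [map_add, Matrix.add_apply]
        exact (totalDegree_add _ _).trans (max_le (ha p q) (hb p q))
      zero_mem' := by intro p q; simp
      smul_mem' := by
        intro c a ha p q
        rw [map_smul, Matrix.smul_apply]
        exact (totalDegree_smul_le _ _).trans (ha p q) }
  have hone : ∀ n, (1 : FreeAlgebra K (Q0 ⊕ Q1)) ∈ D n := by
    intro n p q
    rw [map_one, Matrix.one_apply]
    split_ifs <;> simp
  have hinc : ∀ i p k, (qiInc (MvPolynomial σ K) α i p k).totalDegree ≤ 0 := by
    intro i p k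
    simp only [qiInc, Matrix.of_apply]
    split_ifs <;> simp
  have hS : qiS K (Q0 ⊕ Q1) ≤ D 1 := by
    refine sup_le ?_ ?_
    · rw [Submodule.one_le]
      exact hone 1
    · rw [Submodule.span_le]
      rintro _ ⟨s, rfl⟩ p q
      rw [qiRho_ι]
      rcases s with i | a
      · exact (qi_deg_mul 0 0 _ _ (hinc i) (fun a b => hinc i b a) p q).trans (by simp)
      · refine (qi_deg_mul (0 + 1) 0 _ _ (qi_deg_mul 0 1 _ _ (hinc _) ?_)
          (fun a b => hinc _ b a) p q)
        intro i j
        simp [qiX]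
  change (qiS K (Q0 ⊕ Q1)) ^ n ≤ D n
  induction n with
  | zero => rw [pow_zero, Submodule.one_le]; exact hone 0
  | succ n ih =>
    rw [pow_succ, Submodule.mul_le]
    intro x hx y hy p q
    rw [map_mul]
    exact qi_deg_mul n 1 _ _ (ih hx) (hS hy) p q

theorem qi_chain {K B : Type} [Field K] [Ring B] [Algebra K B] [FiniteDimensional K B]
    (T : Submodule K B) (hT : 1 ≤ T) (m : ℕ) : T ^ m ≤ T ^ (Module.finrank K B - 1) := by
  rcases subsingleton_or_nontrivial B with hB | hB
  · intro x _
    rw [Subsingleton.elim x 0]; exact Submodule.zero_mem _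
  have hmono : ∀ {a b : ℕ}, a ≤ b → T ^ a ≤ T ^ b := fun h => pow_le_pow_right' hT h
  have hex : ∃ n ≤ Module.finrank K B - 1, T ^ n = T ^ (n + 1) := by
    by_contra hcon
    push Not at hcon
    have hr : ∀ n ≤ Module.finrank K B, n + 1 ≤ Module.finrank K ↥(T ^ n) := by
      intro n
      induction n with
      | zero =>
        intro _
        have : Nontrivial ↥(T ^ 0) := by
          rw [Submodule.nontrivial_iff_ne_bot, pow_zero]
          intro h
          have h1 : (1 : B) ∈ (1 : Submodule K B) := Submodule.one_le.mp le_rfl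
          rw [h, Submodule.mem_bot] at h1
          exact one_ne_zero h1
        exact Module.finrank_pos
      | succ n ih =>
        intro hn
        have h1 := ih (by omega)
        have h2 := Submodule.finrank_lt_finrank_of_lt
          (lt_of_le_of_ne (hmono (Nat.le_succ n)) (hcon n (by omega)))
        simp only [Nat.succ_eq_add_one] at h2
        omega
    have h1 := hr _ le_rfl
    have h2 := Submodule.finrank_le (T ^ Module.finrank K B)
    omega
  obtain ⟨n, hn, he⟩ := hex
  have hst : ∀ k, T ^ (n + k) = T ^ n := by
    intro k
    induction k with
    | zero => rfl
    | succ k ih => rw [← add_assoc, pow_succ, ih, ← pow_succ, ← he]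
  calc T ^ m ≤ T ^ (n + m) := hmono (Nat.le_add_left _ _)
    _ = T ^ n := hst m
    _ ≤ _ := hmono hn

theorem qi_bounded (K : Type) [Field K]
    (v w : (a : Q1) → Matrix (Fin (α (ha a))) (Fin (α (ta a))) K) (x : FreeAlgebra K (Q0 ⊕ Q1)) :
    ∃ y ∈ (qiS K (Q0 ⊕ Q1)) ^ (2 * (∑ i, α i) ^ 2 - 1),
      qiRho K v y = qiRho K v x ∧ qiRho K w y = qiRho K w x := by
  let φ := (qiRho K v).prod (qiRho K w)
  have hfr : Module.finrank K (Matrix ((i : Q0) × Fin (α i)) ((i : Q0) × Fin (α i)) K ×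
      Matrix ((i : Q0) × Fin (α i)) ((i : Q0) × Fin (α i)) K) = 2 * (∑ i, α i) ^ 2 := by
    rw [Module.finrank_prod, Module.finrank_matrix]
    simp
    ring
  obtain ⟨n, hn⟩ := qiS_exists K _ x
  have h1 : (1 : Submodule K _) ≤ (qiS K (Q0 ⊕ Q1)).map φ.toLinearMap := by
    rw [Submodule.one_le]
    refine ⟨1, Submodule.one_le.mp le_sup_left, map_one φ⟩
  have h2 := qi_chain _ h1 n
  rw [hfr, ← Submodule.map_pow, ← Submodule.map_pow] at h2
  obtain ⟨y, hy, hxy⟩ := h2 ⟨x, hn, rfl⟩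
  exact ⟨y, hy, congr($(hxy).1), congr($(hxy).2)⟩

theorem qi_scale {K σ : Type} [Field K] (x : σ → K) (f : MvPolynomial σ K) (d : ℕ) :
    (aeval (fun s => Polynomial.C (x s) * Polynomial.X) f : Polynomial K).coeff d
      = aeval x (homogeneousComponent d f) := by
  induction f using MvPolynomial.induction_on' with
  | monomial u a =>
    rw [aeval_monomial]
    have : (u.prod fun i k => (Polynomial.C (x i) * Polynomial.X) ^ k)
        = Polynomial.C (u.prod fun i k => x i ^ k) * Polynomial.X ^ u.degree := by
      simp only [Finsupp.prod, mul_pow, Finset.prod_mul_distrib, Finset.prod_pow_eq_pow_sum,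
        map_prod, map_pow, Finsupp.degree]
      rfl
    rw [this, Polynomial.algebraMap_eq, ← mul_assoc, ← Polynomial.C_mul,
      Polynomial.coeff_C_mul_X_pow]
    by_cases h : d = u.degree
    · rw [if_pos h, homogeneousComponent_of_mem (n := u.degree) (isHomogeneous_monomial a rfl),
        if_pos h, aeval_monomial]
      rfl
    · rw [if_neg h, homogeneousComponent_of_mem (n := u.degree) (isHomogeneous_monomial a rfl),
        if_neg h, map_zero]
  | add p q hp hq => rw [map_add, map_add, map_add, Polynomial.coeff_add, hp, hq]

theorem qi_eval_aeval {K σ : Type} [Field K] (x : σ → Polynomial K) (f : MvPolynomial σ K) (t : K) :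
    (aeval x f : Polynomial K).eval t = aeval (fun s => (x s).eval t) f := by
  have : ((Polynomial.aeval t : Polynomial K →ₐ[K] K).comp (aeval x))
      = (aeval (fun s => (x s).eval t) : MvPolynomial σ K →ₐ[K] K) := by
    ext s
    simp [Polynomial.aeval_def]
  simpa [Polynomial.aeval_def] using congr($this f)

theorem qi_comp_inv {K : Type} [Field K] [Infinite K]
    {f : MvPolynomial ((a : Q1) × (Fin (α (ha a)) × Fin (α (ta a)))) K}
    (hf : f ∈ quiverInvariants K ta ha α) (d : ℕ) :
    homogeneousComponent d f ∈ quiverInvariants K ta ha α := by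
  rw [qi_mem_inv] at hf ⊢
  intro A v
  rw [← qi_scale, ← qi_scale]
  congr 1
  apply Polynomial.funext
  intro t
  rw [qi_eval_aeval, qi_eval_aeval]
  have h := hf A (fun a => t • v a)
  have e1 : (fun s => (Polynomial.C (repCoords (fun a => (A (ha a)).val * v a * ((A (ta a))⁻¹).val) s)
      * Polynomial.X).eval t)
      = repCoords (fun a => (A (ha a)).val * (t • v a) * ((A (ta a))⁻¹).val) := by
    funext s
    simp only [repCoords, Polynomial.eval_mul, Polynomial.eval_C, Polynomial.eval_X,
      Matrix.mul_smul, Matrix.smul_mul, Matrix.smul_apply, smul_eq_mul]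
    ring
  have e2 : (fun s => (Polynomial.C (repCoords v s) * Polynomial.X).eval t)
      = repCoords (fun a => t • v a) := by
    funext s
    simp only [repCoords, Polynomial.eval_mul, Polynomial.eval_C, Polynomial.eval_X,
      Matrix.smul_apply, smul_eq_mul]
    ring
  rw [e1, e2]
  exact h

theorem qi_degenerate {K : Type} [Field K] [Infinite K]
    (v : (a : Q1) → Matrix (Fin (α (ha a))) (Fin (α (ta a))) K)
    (π : (i : Q0) → Matrix (Fin (α i)) (Fin (α i)) K) (hπ : ∀ i, π i * π i = π i)
    (hv : ∀ a, π (ha a) * v a * π (ta a) = v a * π (ta a))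
    (f : MvPolynomial ((a : Q1) × (Fin (α (ha a)) × Fin (α (ta a)))) K)
    (hf : f ∈ quiverInvariants K ta ha α) :
    aeval (repCoords fun a => π (ha a) * v a * π (ta a)
      + (1 - π (ha a)) * v a * (1 - π (ta a))) f = aeval (repCoords v) f := by
  rw [qi_mem_inv] at hf
  let P : Polynomial K := aeval (fun s => Polynomial.C (repCoords (fun a => π (ha a) * v a * π (ta a)
      + (1 - π (ha a)) * v a * (1 - π (ta a))) s)
      + Polynomial.C (repCoords (fun a => π (ha a) * v a * (1 - π (ta a))) s) * Polynomial.X) f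
  have hP : ∀ t : K, P.eval t = aeval (repCoords fun a => π (ha a) * v a * π (ta a)
      + (1 - π (ha a)) * v a * (1 - π (ta a)) + t • (π (ha a) * v a * (1 - π (ta a)))) f := by
    intro t
    rw [qi_eval_aeval]
    congr 2
    funext s
    simp only [repCoords, Polynomial.eval_mul, Polynomial.eval_C, Polynomial.eval_X,
      Polynomial.eval_add, Matrix.add_apply, Matrix.smul_apply, smul_eq_mul]
    ring
  have hne : ∀ t : K, t ≠ 0 → P.eval t = aeval (repCoords v) f := by
    intro t ht
    have hmul : ∀ (s : K), s ≠ 0 → ∀ i, (π i + s • (1 - π i)) * (π i + s⁻¹ • (1 - π i)) = 1 := by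
      intro s hs i
      have z1 : π i * (1 - π i) = 0 := by rw [mul_sub, mul_one, hπ, sub_self]
      have z2 : (1 - π i) * π i = 0 := by rw [sub_mul, one_mul, hπ, sub_self]
      have z3 : (1 - π i) * (1 - π i) = 1 - π i := by rw [sub_mul, one_mul, z1, sub_zero]
      rw [mul_add, add_mul, add_mul, hπ, smul_mul_assoc, z2, mul_smul_comm, z1, mul_smul_comm,
        smul_mul_assoc, z3, smul_smul, inv_mul_cancel₀ hs, one_smul, smul_zero, smul_zero,
        add_zero, zero_add, add_sub_cancel]
    let A : (i : Q0) → GeneralLinearGroup (Fin (α i)) K := fun i =>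
      ⟨π i + t⁻¹ • (1 - π i), π i + t • (1 - π i),
        by simpa using hmul t⁻¹ (inv_ne_zero ht) i, hmul t ht i⟩
    rw [hP, ← hf A v]
    congr 3
    funext a
    change _ = (π (ha a) + t⁻¹ • (1 - π (ha a))) * v a * (π (ta a) + t • (1 - π (ta a)))
    have hz : (1 - π (ha a)) * v a * π (ta a) = 0 := by
      rw [Matrix.sub_mul, Matrix.sub_mul, Matrix.one_mul, hv, sub_self]
    simp only [Matrix.mul_add, Matrix.add_mul, Matrix.smul_mul, Matrix.mul_smul, hz, smul_zero,
      add_zero]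
    rw [smul_add, smul_smul, mul_inv_cancel₀ ht, one_smul]
    abel
  have hconst : P = Polynomial.C (aeval (repCoords v) f) := by
    apply Polynomial.eq_of_infinite_eval_eq
    refine Set.Infinite.mono (s := {0}ᶜ) ?_ (Set.finite_singleton (0 : K)).infinite_compl
    intro t ht
    simp only [Set.mem_ofPred_eq, Polynomial.eval_C]
    exact hne t ht
  have h0 := hP 0
  rw [hconst, Polynomial.eval_C] at h0
  simpa using h0.symm

theorem qi_aux_one {K : Type} [Field K]
    (v : (a : Q1) → Matrix (Fin (α (ha a))) (Fin (α (ta a))) K) (m : ((i : Q0) × Fin (α i)) → K) :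
    (qiRho K v 1) *ᵥ m = m := by rw [map_one, Matrix.one_mulVec]

theorem qi_aux_zero {K : Type} [Field K]
    (v : (a : Q1) → Matrix (Fin (α (ha a))) (Fin (α (ta a))) K) (m : ((i : Q0) × Fin (α i)) → K) :
    (qiRho K v 0) *ᵥ m = 0 := by rw [map_zero, Matrix.zero_mulVec]

theorem qi_aux_mul {K : Type} [Field K]
    (v : (a : Q1) → Matrix (Fin (α (ha a))) (Fin (α (ta a))) K) (x y : FreeAlgebra K (Q0 ⊕ Q1))
    (m : ((i : Q0) × Fin (α i)) → K) :
    (qiRho K v (x * y)) *ᵥ m = (qiRho K v x) *ᵥ ((qiRho K v y) *ᵥ m) := by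
  rw [map_mul, Matrix.mulVec_mulVec]

theorem qi_aux_add {K : Type} [Field K]
    (v : (a : Q1) → Matrix (Fin (α (ha a))) (Fin (α (ta a))) K) (x y : FreeAlgebra K (Q0 ⊕ Q1))
    (m : ((i : Q0) × Fin (α i)) → K) :
    (qiRho K v (x + y)) *ᵥ m = (qiRho K v x) *ᵥ m + (qiRho K v y) *ᵥ m := by
  rw [map_add, Matrix.add_mulVec]

theorem qi_aux_smul {K : Type} [Field K]
    (v : (a : Q1) → Matrix (Fin (α (ha a))) (Fin (α (ta a))) K) (c : K)
    (x : FreeAlgebra K (Q0 ⊕ Q1)) (m : ((i : Q0) × Fin (α i)) → K) :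
    (qiRho K v (c • x)) *ᵥ m = c • ((qiRho K v x) *ᵥ m) := by
  rw [map_smul, Matrix.smul_mulVec]

/-- module attached to a representation -/
def QiMod {K : Type} [Field K]
    (_v : (a : Q1) → Matrix (Fin (α (ha a))) (Fin (α (ta a))) K) : Type :=
  ((i : Q0) × Fin (α i)) → K

instance qiModGrp {K : Type} [Field K]
    (v : (a : Q1) → Matrix (Fin (α (ha a))) (Fin (α (ta a))) K) : AddCommGroup (QiMod v) :=
  inferInstanceAs (AddCommGroup (((i : Q0) × Fin (α i)) → K))

instance qiModK {K : Type} [Field K]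
    (v : (a : Q1) → Matrix (Fin (α (ha a))) (Fin (α (ta a))) K) : Module K (QiMod v) :=
  inferInstanceAs (Module K (((i : Q0) × Fin (α i)) → K))

instance qiModFin {K : Type} [Field K]
    (v : (a : Q1) → Matrix (Fin (α (ha a))) (Fin (α (ta a))) K) : FiniteDimensional K (QiMod v) :=
  inferInstanceAs (FiniteDimensional K (((i : Q0) × Fin (α i)) → K))

noncomputable instance qiModF {K : Type} [Field K]
    (v : (a : Q1) → Matrix (Fin (α (ha a))) (Fin (α (ta a))) K) :
    Module (FreeAlgebra K (Q0 ⊕ Q1)) (QiMod v) where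
  smul x m := (qiRho K v x) *ᵥ (m : ((i : Q0) × Fin (α i)) → K)
  one_smul := qi_aux_one v
  mul_smul := qi_aux_mul v
  smul_zero x := Matrix.mulVec_zero _
  smul_add x m n := Matrix.mulVec_add _ _ _
  add_smul := qi_aux_add v
  zero_smul := qi_aux_zero v

theorem qi_smul_def {K : Type} [Field K]
    (v : (a : Q1) → Matrix (Fin (α (ha a))) (Fin (α (ta a))) K)
    (x : FreeAlgebra K (Q0 ⊕ Q1)) (m : ((i : Q0) × Fin (α i)) → K) :
    (x • (show QiMod v from m) : QiMod v) = (qiRho K v x) *ᵥ m := rfl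

instance qiModTower {K : Type} [Field K]
    (v : (a : Q1) → Matrix (Fin (α (ha a))) (Fin (α (ta a))) K) :
    IsScalarTower K (FreeAlgebra K (Q0 ⊕ Q1)) (QiMod v) where
  smul_assoc := qi_aux_smul v

theorem qi_core {K : Type} [Field K] [Infinite K]
    (v : (a : Q1) → Matrix (Fin (α (ha a))) (Fin (α (ta a))) K)
    (W : Submodule K (((i : Q0) × Fin (α i)) → K))
    (hW : ∀ x, ∀ m ∈ W, qiRho K v x *ᵥ m ∈ W) :
    ∃ v' : (a : Q1) → Matrix (Fin (α (ha a))) (Fin (α (ta a))) K,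
      (∀ f ∈ quiverInvariants K ta ha α, aeval (repCoords v') f = aeval (repCoords v) f) ∧
      ∃ D : Matrix ((i : Q0) × Fin (α i)) ((i : Q0) × Fin (α i)) K,
        (∀ m, D *ᵥ m ∈ W) ∧ (∀ m ∈ W, D *ᵥ m = m) ∧
        (∀ x m, D *ᵥ m = 0 → D *ᵥ (qiRho K v' x *ᵥ m) = 0) ∧
        (∀ m, D *ᵥ (m - D *ᵥ m) = 0) ∧
        (∀ x, ∀ m ∈ W, qiRho K v' x *ᵥ m = qiRho K v x *ᵥ m) := by
  -- projection onto U
  obtain ⟨P, hP1, hP2⟩ : ∃ P : Matrix ((i : Q0) × Fin (α i)) ((i : Q0) × Fin (α i)) K,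
      (∀ m : ((i : Q0) × Fin (α i)) → K, (P *ᵥ m) ∈ W) ∧
      (∀ m : ((i : Q0) × Fin (α i)) → K, m ∈ W → P *ᵥ m = m) := by
    obtain ⟨g, hg⟩ := LinearMap.exists_leftInverse_of_injective
      (W).subtype (Submodule.ker_subtype _)
    let p : (((i : Q0) × Fin (α i)) → K) →ₗ[K] (((i : Q0) × Fin (α i)) → K) :=
      W.subtype ∘ₗ g
    refine ⟨LinearMap.toMatrix' p, ?_, ?_⟩
    · intro m
      rw [← Matrix.toLin'_apply, Matrix.toLin'_toMatrix']
      exact (g m).2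
    · intro m hm
      rw [← Matrix.toLin'_apply, Matrix.toLin'_toMatrix']
      exact congr((($hg ⟨m, hm⟩ : (W)) : ((i : Q0) × Fin (α i)) → K))
  have hgen : ∀ s, ∀ m : ((i : Q0) × Fin (α i)) → K, m ∈ W → (qiGen v s *ᵥ m) ∈ W := by
    intro s m hm
    have := hW (FreeAlgebra.ι K s) m hm
    rwa [qiRho_ι] at this
  have hPgP : ∀ s, P * (qiGen v s * P) = qiGen v s * P := by
    intro s
    apply Matrix.ext_of_mulVec_single
    intro p
    rw [← Matrix.mulVec_mulVec]
    apply hP2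
    rw [← Matrix.mulVec_mulVec]
    exact hgen s _ (hP1 _)
  let π : (i : Q0) → Matrix (Fin (α i)) (Fin (α i)) K :=
    fun i => (qiInc K α i)ᵀ * P * qiInc K α i
  have hππ : ∀ i, π i * π i = π i := by
    intro i
    have h := hPgP (Sum.inl i)
    simp only [qiGen] at h
    calc π i * π i = (qiInc K α i)ᵀ * (P * (qiInc K α i * (qiInc K α i)ᵀ * P)) * qiInc K α i := by
          simp only [π, Matrix.mul_assoc]
      _ = ((qiInc K α i)ᵀ * qiInc K α i) * ((qiInc K α i)ᵀ * P * qiInc K α i) := by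
          rw [h]; simp only [Matrix.mul_assoc]
      _ = π i := by rw [qiInc_same, Matrix.one_mul]
  have hπv : ∀ a, π (ha a) * v a * π (ta a) = v a * π (ta a) := by
    intro a
    have h := hPgP (Sum.inr a)
    simp only [qiGen] at h
    calc π (ha a) * v a * π (ta a) = (qiInc K α (ha a))ᵀ *
          (P * (qiInc K α (ha a) * v a * (qiInc K α (ta a))ᵀ * P)) * qiInc K α (ta a) := by
          simp only [π, Matrix.mul_assoc]
      _ = ((qiInc K α (ha a))ᵀ * qiInc K α (ha a)) *
          (v a * ((qiInc K α (ta a))ᵀ * P * qiInc K α (ta a))) := by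
          rw [h]; simp only [Matrix.mul_assoc]
      _ = v a * π (ta a) := by rw [qiInc_same, Matrix.one_mul]
  let D := qiDiag π
  have hD : D = ∑ i, qiGen v (Sum.inl i) * (P * qiGen v (Sum.inl i)) := by
    simp only [D, qiDiag, π, qiGen, Matrix.mul_assoc]
  have hD1 : ∀ m : ((i : Q0) × Fin (α i)) → K, (D *ᵥ m) ∈ W := by
    intro m
    rw [hD, Matrix.sum_mulVec]
    refine Submodule.sum_mem W ?_
    intro i _
    rw [← Matrix.mulVec_mulVec, ← Matrix.mulVec_mulVec]
    exact hgen _ _ (hP1 _)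
  have hD2 : ∀ m : ((i : Q0) × Fin (α i)) → K, m ∈ W → D *ᵥ m = m := by
    intro m hm
    rw [hD, Matrix.sum_mulVec]
    have : ∀ i : Q0, (qiGen v (Sum.inl i) * (P * qiGen v (Sum.inl i))) *ᵥ m
        = (qiInc K α i * (qiInc K α i)ᵀ) *ᵥ m := by
      intro i
      rw [← Matrix.mulVec_mulVec, ← Matrix.mulVec_mulVec, hP2 _ (hgen _ _ hm),
        Matrix.mulVec_mulVec]
      congr 1
      simp only [qiGen]
      rw [Matrix.mul_assoc, ← Matrix.mul_assoc (qiInc K α i)ᵀ, qiInc_same, Matrix.one_mul]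
    simp only [this]
    rw [← Matrix.sum_mulVec, qiInc_sum, Matrix.one_mulVec]
  let v' : (a : Q1) → Matrix (Fin (α (ha a))) (Fin (α (ta a))) K :=
    fun a => π (ha a) * v a * π (ta a) + (1 - π (ha a)) * v a * (1 - π (ta a))
  have hcomm : ∀ x, D * qiRho K v' x = qiRho K v' x * D := by
    apply qiRho_intertwine
    apply qiGen_diag
    intro a
    have hz : (1 - π (ta a)) * π (ta a) = 0 := by
      rw [Matrix.sub_mul, hππ, Matrix.one_mul, sub_self]
    have hz' : π (ha a) * (1 - π (ha a)) = 0 := by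
      rw [Matrix.mul_sub, hππ, Matrix.mul_one, sub_self]
    simp only [v', Matrix.mul_add, Matrix.add_mul, Matrix.mul_assoc, hz, hππ, Matrix.mul_zero,
      add_zero]
    rw [← Matrix.mul_assoc (π (ha a)) (1 - π (ha a)), hz', Matrix.zero_mul, add_zero,
      ← Matrix.mul_assoc (π (ha a)) (π (ha a)), hππ]
  have hgen' : ∀ s, ∀ m : ((i : Q0) × Fin (α i)) → K, m ∈ W → qiGen v' s *ᵥ m = qiGen v s *ᵥ m := by
    intro s m hm
    rcases s with i | a
    · rfl
    · have h1 : qiGen v' (Sum.inr a) * D = qiGen v (Sum.inr a) * D := by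
        have hz : (1 - π (ta a)) * π (ta a) = 0 := by
          rw [Matrix.sub_mul, hππ, Matrix.one_mul, sub_self]
        have hz2 : v' a * π (ta a) = v a * π (ta a) := by
          have : v' a * π (ta a) = π (ha a) * v a * (π (ta a) * π (ta a))
              + (1 - π (ha a)) * v a * ((1 - π (ta a)) * π (ta a)) := by
            simp only [v', Matrix.add_mul, Matrix.mul_assoc]
          rw [this, hz, hππ, Matrix.mul_zero, add_zero, hπv]
        change qiInc K α (ha a) * v' a * (qiInc K α (ta a))ᵀ * qiDiag π
          = qiInc K α (ha a) * v a * (qiInc K α (ta a))ᵀ * qiDiag π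
        rw [Matrix.mul_assoc _ _ (qiDiag π), Matrix.mul_assoc _ _ (qiDiag π), inc_qiDiag,
          Matrix.mul_assoc (qiInc K α (ha a)), Matrix.mul_assoc (qiInc K α (ha a)),
          ← Matrix.mul_assoc (v' a), ← Matrix.mul_assoc (v a), hz2]
      have h2 := congr($h1 *ᵥ m)
      rwa [← Matrix.mulVec_mulVec, ← Matrix.mulVec_mulVec, hD2 m hm] at h2
  have hrho : ∀ x, ∀ m : ((i : Q0) × Fin (α i)) → K, m ∈ W → qiRho K v' x *ᵥ m = qiRho K v x *ᵥ m := by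
    intro x
    induction x using FreeAlgebra.induction with
    | grade0 r => intro m _; rw [AlgHom.commutes, AlgHom.commutes]
    | grade1 s => intro m hm; rw [qiRho_ι, qiRho_ι, hgen' s m hm]
    | mul a b ha hb =>
      intro m hm
      rw [map_mul, map_mul, ← Matrix.mulVec_mulVec, ← Matrix.mulVec_mulVec, hb m hm]
      exact ha _ (hW b m hm)
    | add a b ha hb =>
      intro m hm
      rw [map_add, map_add, Matrix.add_mulVec, Matrix.add_mulVec, ha m hm, hb m hm]
  refine ⟨v', fun f hf => qi_degenerate v π hππ hπv f hf, D, hD1, hD2, ?_, ?_, hrho⟩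
  · intro x m hm
    rw [Matrix.mulVec_mulVec, hcomm, ← Matrix.mulVec_mulVec, hm, Matrix.mulVec_zero]
  · intro m
    rw [Matrix.mulVec_sub, hD2 _ (hD1 m), sub_self]

theorem qi_step {K : Type} [Field K] [Infinite K]
    (v : (a : Q1) → Matrix (Fin (α (ha a))) (Fin (α (ta a))) K)
    (U : Submodule (FreeAlgebra K (Q0 ⊕ Q1)) (QiMod v))
    (hU : IsSemisimpleModule (FreeAlgebra K (Q0 ⊕ Q1)) U) (hne : U ≠ ⊤) :
    ∃ v' : (a : Q1) → Matrix (Fin (α (ha a))) (Fin (α (ta a))) K,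
      (∀ f ∈ quiverInvariants K ta ha α, aeval (repCoords v') f = aeval (repCoords v) f) ∧
      ∃ U' : Submodule (FreeAlgebra K (Q0 ⊕ Q1)) (QiMod v'),
        IsSemisimpleModule (FreeAlgebra K (Q0 ⊕ Q1)) U' ∧
        Module.finrank K U < Module.finrank K U' := by
  obtain ⟨v', hinv, D, hD1, hD2, hD3, hD4, hrho⟩ := qi_core v
    (show Submodule K (((i : Q0) × Fin (α i)) → K) from U.restrictScalars K)
    (fun x m hm => U.smul_mem x hm)
  refine ⟨v', hinv, ?_⟩
  let U₂ : Submodule (FreeAlgebra K (Q0 ⊕ Q1)) (QiMod v') :=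
    { carrier := {m | (show QiMod v from m) ∈ U}
      add_mem' := fun {a b} ha hb => U.add_mem ha hb
      zero_mem' := U.zero_mem
      smul_mem' := by
        intro x m hm
        have h1 : (x • (show QiMod v from m)) ∈ U := U.smul_mem x hm
        exact (congrArg (fun z : QiMod v => z ∈ U) (hrho x m hm)).mpr h1 }
  let e : U₂ ≃ₗ[FreeAlgebra K (Q0 ⊕ Q1)] U :=
    { toFun := fun m => ⟨m.1, m.2⟩
      invFun := fun m => ⟨m.1, m.2⟩
      left_inv := fun _ => rfl
      right_inv := fun _ => rfl
      map_add' := fun _ _ => rfl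
      map_smul' := by
        intro x m
        apply Subtype.ext
        exact hrho x m.1 m.2 }
  have hU₂ : IsSemisimpleModule (FreeAlgebra K (Q0 ⊕ Q1)) U₂ := IsSemisimpleModule.congr e
  let C : Submodule (FreeAlgebra K (Q0 ⊕ Q1)) (QiMod v') :=
    { carrier := {m | D *ᵥ (m : ((i : Q0) × Fin (α i)) → K) = 0}
      add_mem' := by
        intro a b ha hb
        exact (Matrix.mulVec_add _ _ _).trans ((congrArg₂ (· + ·) ha hb).trans (add_zero _))
      zero_mem' := Matrix.mulVec_zero _
      smul_mem' := fun x m hm => hD3 x m hm }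
  have hC : C ≠ ⊥ := by
    intro hbot
    apply hne
    rw [eq_top_iff]
    intro m _
    have h1 : (show QiMod v' from
      ((show ((i : Q0) × Fin (α i)) → K from m) - D *ᵥ (m : ((i : Q0) × Fin (α i)) → K))) ∈ C :=
      hD4 m
    rw [hbot, Submodule.mem_bot] at h1
    have h2 : (show ((i : Q0) × Fin (α i)) → K from m) = D *ᵥ (m : ((i : Q0) × Fin (α i)) → K) :=
      sub_eq_zero.mp h1
    exact (congrArg (fun z : QiMod v => z ∈ U) h2).mpr (hD1 m)
  have hart : IsArtinian (FreeAlgebra K (Q0 ⊕ Q1)) (QiMod v') :=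
    isArtinian_of_tower K inferInstance
  obtain ⟨T, hT, hTC⟩ := (eq_bot_or_exists_atom_le C).resolve_left hC
  have hTs : IsSimpleModule (FreeAlgebra K (Q0 ⊕ Q1)) T := isSimpleModule_iff_isAtom.mpr hT
  refine ⟨U₂ ⊔ T, hU₂.sup inferInstance, ?_⟩
  have hlt : U₂ < U₂ ⊔ T := by
    rw [left_lt_sup]
    intro hle
    apply hT.1
    rw [eq_bot_iff]
    intro t ht
    have h1 : D *ᵥ (t : ((i : Q0) × Fin (α i)) → K) = 0 := hTC ht
    have h2 := hD2 t (hle ht)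
    rw [Submodule.mem_bot]
    exact h2.symm.trans h1
  have h3 : Module.finrank K U₂ = Module.finrank K U := (e.restrictScalars K).finrank_eq
  rw [← h3]
  exact Submodule.finrank_lt_finrank_of_lt (K := K) (s := U₂.restrictScalars K)
    (t := (U₂ ⊔ T).restrictScalars K) hlt

theorem qi_semisimplify {K : Type} [Field K] [Infinite K]
    (v : (a : Q1) → Matrix (Fin (α (ha a))) (Fin (α (ta a))) K) :
    ∃ v' : (a : Q1) → Matrix (Fin (α (ha a))) (Fin (α (ta a))) K,
      (∀ f ∈ quiverInvariants K ta ha α, aeval (repCoords v') f = aeval (repCoords v) f) ∧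
      IsSemisimpleModule (FreeAlgebra K (Q0 ⊕ Q1)) (QiMod v') := by
  by_contra hcon
  push Not at hcon
  have key : ∀ n : ℕ, ∃ v' : (a : Q1) → Matrix (Fin (α (ha a))) (Fin (α (ta a))) K,
      (∀ f ∈ quiverInvariants K ta ha α, aeval (repCoords v') f = aeval (repCoords v) f) ∧
      ∃ U' : Submodule (FreeAlgebra K (Q0 ⊕ Q1)) (QiMod v'),
        IsSemisimpleModule (FreeAlgebra K (Q0 ⊕ Q1)) U' ∧ n ≤ Module.finrank K U' := by
    intro n
    induction n with
    | zero => exact ⟨v, fun _ _ => rfl, ⊥,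
        IsSemisimpleModule.of_sSup_simples_eq_top (Subsingleton.elim _ _), Nat.zero_le _⟩
    | succ n ih =>
      obtain ⟨v1, h1, U, hU, hn⟩ := ih
      have hne : U ≠ ⊤ := by
        rintro rfl
        exact hcon v1 h1 (IsSemisimpleModule.congr
          (Submodule.topEquiv (R := FreeAlgebra K (Q0 ⊕ Q1)) (M := QiMod v1)).symm)
      obtain ⟨v2, h2, U', hU', hlt⟩ := qi_step v1 U hU hne
      exact ⟨v2, fun f hf => (h2 f hf).trans (h1 f hf), U', hU', by omega⟩
  obtain ⟨v', -, U', -, hn⟩ := key (Fintype.card ((i : Q0) × Fin (α i)) + 1)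
  have h1 : Module.finrank K U' ≤ Module.finrank K (QiMod v') :=
    Submodule.finrank_le (U'.restrictScalars K)
  have h2 : Module.finrank K (QiMod v') = Fintype.card ((i : Q0) × Fin (α i)) :=
    Module.finrank_pi K
  omega

theorem qi_iso {K : Type} [Field K]
    (v w : (a : Q1) → Matrix (Fin (α (ha a))) (Fin (α (ta a))) K)
    (e : QiMod v ≃ₗ[FreeAlgebra K (Q0 ⊕ Q1)] QiMod w)
    (f : MvPolynomial ((a : Q1) × (Fin (α (ha a)) × Fin (α (ta a)))) K)
    (hf : f ∈ quiverInvariants K ta ha α) :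
    aeval (repCoords v) f = aeval (repCoords w) f := by
  let eK : (((i : Q0) × Fin (α i)) → K) ≃ₗ[K] (((i : Q0) × Fin (α i)) → K) := e.restrictScalars K
  let Φ := LinearMap.toMatrix' eK.toLinearMap
  let Ψ := LinearMap.toMatrix' eK.symm.toLinearMap
  have h1 : Φ * Ψ = 1 := by
    rw [← LinearMap.toMatrix'_comp]; simp
  have h2 : Ψ * Φ = 1 := by
    rw [← LinearMap.toMatrix'_comp]; simp
  have hΦ : ∀ m, Φ *ᵥ m = eK m := by
    intro m
    rw [← Matrix.toLin'_apply, Matrix.toLin'_toMatrix']; rfl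
  have h3 : ∀ s, Φ * qiGen v s = qiGen w s * Φ := by
    intro s
    apply Matrix.ext_of_mulVec_single
    intro p
    rw [← Matrix.mulVec_mulVec, ← Matrix.mulVec_mulVec, hΦ, hΦ, ← qiRho_ι K, ← qiRho_ι K]
    exact e.map_smul (FreeAlgebra.ι K s) _
  have h4 : ∀ s, Ψ * qiGen w s = qiGen v s * Ψ := by
    intro s
    calc Ψ * qiGen w s = Ψ * (qiGen w s * Φ) * Ψ := by
          rw [Matrix.mul_assoc, Matrix.mul_assoc, h1, Matrix.mul_one]
      _ = (Ψ * Φ) * qiGen v s * Ψ := by rw [← h3]; simp only [Matrix.mul_assoc]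
      _ = _ := by rw [h2, Matrix.one_mul]
  have hA : ∀ (X Y : Matrix ((i : Q0) × Fin (α i)) ((i : Q0) × Fin (α i)) K) (i : Q0),
      X * Y = 1 → (Y * (qiInc K α i * (qiInc K α i)ᵀ) = (qiInc K α i * (qiInc K α i)ᵀ) * Y) →
      ((qiInc K α i)ᵀ * X * qiInc K α i) * ((qiInc K α i)ᵀ * Y * qiInc K α i) = 1 := by
    intro X Y i hXY hY
    calc _ = (qiInc K α i)ᵀ * X * ((qiInc K α i * (qiInc K α i)ᵀ) * Y) * qiInc K α i := by
          simp only [Matrix.mul_assoc]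
      _ = (qiInc K α i)ᵀ * (X * Y) * qiInc K α i * ((qiInc K α i)ᵀ * qiInc K α i) := by
          rw [← hY]; simp only [Matrix.mul_assoc]
      _ = 1 := by rw [hXY, Matrix.mul_one, qiInc_same, Matrix.one_mul]
  let A : (i : Q0) → GeneralLinearGroup (Fin (α i)) K := fun i =>
    ⟨(qiInc K α i)ᵀ * Φ * qiInc K α i, (qiInc K α i)ᵀ * Ψ * qiInc K α i,
      hA Φ Ψ i h1 (h4 (Sum.inl i)), hA Ψ Φ i h2 (h3 (Sum.inl i))⟩
  rw [qi_mem_inv] at hf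
  rw [← hf A v]
  congr 3
  funext a
  change ((qiInc K α (ha a))ᵀ * Φ * qiInc K α (ha a)) * v a *
    ((qiInc K α (ta a))ᵀ * Ψ * qiInc K α (ta a)) = w a
  have h5 := h3 (Sum.inr a)
  simp only [qiGen] at h5
  calc _ = (qiInc K α (ha a))ᵀ * (Φ * (qiInc K α (ha a) * v a * (qiInc K α (ta a))ᵀ)) * Ψ *
        qiInc K α (ta a) := by simp only [Matrix.mul_assoc]
    _ = ((qiInc K α (ha a))ᵀ * qiInc K α (ha a)) * w a * ((qiInc K α (ta a))ᵀ * (Φ * Ψ) *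
        qiInc K α (ta a)) := by rw [h5]; simp only [Matrix.mul_assoc]
    _ = w a := by rw [h1, Matrix.mul_one, qiInc_same, qiInc_same, Matrix.one_mul, Matrix.mul_one]

theorem qi_charpoly {K : Type} [Field K]
    (v : (a : Q1) → Matrix (Fin (α (ha a))) (Fin (α (ta a))) K) (x : FreeAlgebra K (Q0 ⊕ Q1)) :
    (Algebra.lsmul K K (QiMod v) x).charpoly = (qiRho K v x).charpoly := by
  rw [← Matrix.charpoly_toLin']
  rfl

theorem qi_separate {K : Type} [Field K] [Infinite K]
    (v w : (a : Q1) → Matrix (Fin (α (ha a))) (Fin (α (ta a))) K)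
    (h : ∀ x : FreeAlgebra K (Q0 ⊕ Q1), (qiRho K v x).det = (qiRho K w x).det)
    (f : MvPolynomial ((a : Q1) × (Fin (α (ha a)) × Fin (α (ta a)))) K)
    (hf : f ∈ quiverInvariants K ta ha α) :
    aeval (repCoords v) f = aeval (repCoords w) f := by
  obtain ⟨v', hv, sv⟩ := qi_semisimplify v
  obtain ⟨w', hw, sw⟩ := qi_semisimplify w
  have h' : ∀ x : FreeAlgebra K (Q0 ⊕ Q1), (qiRho K v' x).det = (qiRho K w' x).det := by
    intro x
    rw [← qi_aeval_det, ← qi_aeval_det, hv _ (qi_det_inv K x), hw _ (qi_det_inv K x),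
      qi_aeval_det, qi_aeval_det, h]
  obtain ⟨e⟩ := qi_brauer_nesbitt (K := K) (F := FreeAlgebra K (Q0 ⊕ Q1)) _
    (QiMod v') (QiMod w') rfl (by
      intro x
      rw [qi_charpoly, qi_charpoly]
      apply Polynomial.funext
      intro t
      rw [Matrix.eval_charpoly, Matrix.eval_charpoly]
      have := h' (algebraMap K _ t - x)
      rw [map_sub, map_sub, AlgHom.commutes, AlgHom.commutes] at this
      exact this)
  rw [← hv f hf, ← hw f hf]
  exact qi_iso v' w' e f hf

end QI

theorem stmt_9 (K : Type) [Field K] [IsAlgClosed K] {Q0 Q1 : Type} [Fintype Q0] [Fintype Q1]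
    (ta ha : Q1 → Q0) (α : Q0 → ℕ) (N : ℕ) (hN : N = ∑ i, α i)
    (v w : (a : Q1) → Matrix (Fin (α (ha a))) (Fin (α (ta a))) K)
    (hvw : ∃ f ∈ quiverInvariants K ta ha α, aeval (repCoords v) f ≠ aeval (repCoords w) f) :
    ∃ g ∈ quiverInvariants K ta ha α, (∃ d ≤ N ^ 6, g.IsHomogeneous d) ∧
      aeval (repCoords v) g ≠ aeval (repCoords w) g := by
  classical
  have hinf : Infinite K := IsAlgClosed.instInfinite
  by_cases hdet : ∀ x : FreeAlgebra K (Q0 ⊕ Q1), (qiRho K v x).det = (qiRho K w x).det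
  · obtain ⟨f, hf, hne⟩ := hvw
    exact absurd (qi_separate v w hdet f hf) hne
  push Not at hdet
  obtain ⟨x, hx⟩ := hdet
  obtain ⟨y, hy, hyv, hyw⟩ := qi_bounded K v w x
  rw [← hyv, ← hyw, ← qi_aeval_det, ← qi_aeval_det] at hx
  have hdeg := qi_deg_det _ _ (qi_rho_deg (ta := ta) (ha := ha) (α := α) K _ y hy)
  have hinv := qi_det_inv (ta := ta) (ha := ha) (α := α) K y
  generalize (qiRho K (qiX K ta ha α) y).det = g at hx hdeg hinv
  have hex : ∃ d ∈ Finset.range (g.totalDegree + 1),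
      aeval (repCoords v) (homogeneousComponent d g)
        ≠ aeval (repCoords w) (homogeneousComponent d g) := by
    by_contra hcon
    push Not at hcon
    apply hx
    rw [← sum_homogeneousComponent g, map_sum, map_sum]
    exact Finset.sum_congr rfl hcon
  obtain ⟨d, hd, hne⟩ := hex
  refine ⟨homogeneousComponent d g, qi_comp_inv hinv d,
    ⟨d, ?_, homogeneousComponent_isHomogeneous d g⟩, hne⟩
  have hd' : d ≤ g.totalDegree := Nat.lt_succ_iff.mp (Finset.mem_range.mp hd)
  refine (hd'.trans hdeg).trans ?_
  rw [Fintype.card_sigma]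
  simp only [Fintype.card_fin]
  rw [← hN]
  rcases N with _ | _ | n
  · simp
  · simp
  · calc (n + 1 + 1) * (2 * (n + 1 + 1) ^ 2 - 1) ≤ (n + 1 + 1) * (2 * (n + 1 + 1) ^ 2) :=
        Nat.mul_le_mul_left _ (Nat.sub_le _ _)
      _ ≤ (n + 1 + 1) ^ 4 := by
        have : (n + 1 + 1) ^ 4 = (n + 1 + 1) * ((n + 1 + 1) * (n + 1 + 1) ^ 2) := by ring
        rw [this]
        gcongr
        omega
      _ ≤ (n + 1 + 1) ^ 6 := Nat.pow_le_pow_right (by omega) (by omega)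
end
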